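/- A_n^{maj,exc,fix}(q,t,r) = Σ over m from 0 to ⌊n/2⌋ and compositions (k_0,k_1,...,k_m) with k_0 ≥ 0, each k_i ≥ 2 for i ≥ 1, and k_0+k_1+...+k_m = n, of the multinomial q-coefficient [n choose k_0,...,k_m]_q · r^{k_0} · Π_{i=1}^m tq·[k_i−1]_{tq}. -/

import Mathlib

/-!
The closed formula is the expansion of the generating function of Shareshian and Wachs
`∑ A_n z^n / (q; q)_n = (1 - t q) e_q(r z) / (e_q(t q z) - t q e_q(z))`, where
`e_q(z) = ∑ z^k / (q; q)_k`, and the point is to prove the latter.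

*Words.* Sort a word `w` over the alphabet `Fin N` stably, and let `σ` be the sorting permutation.
The words with a given `σ` are, up to reversal of the alphabet, the sequences that decrease weakly,
and strictly at the descents of `σ`. When the letter `a` has weight `q ^ (N - 1 - a)` and
`q ^ N = 0`, they contribute `q ^ maj σ / (q; q)_n`. So `A_n / (q; q)_n` is a sum over all words of
length `n` (`qpoch_mul_wordSum`), in which the excedances and the fixed points of `σ` are read off
from the positions and the ranks of the letters.

*Rows.* Cut a word with content `β` into consecutive rows, row `a` having length `β a`. A letter
`b < a` in row `a` gives an excedance, a letter `b > a` gives none, and the copies of `a` in row `a`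
are governed by how many foreign letters precede them in the row, compared with the number of
copies of `a` in earlier rows (`wordWt_ofRows`). Summing over the lengths of the rows turns each gap
between foreign letters into a geometric series. What remains is the sum in MacMahon's Master
Theorem for the matrix with entries `t x_b / (1 - t x_b)` below the diagonal, `x_b / (1 - x_b)`
above it and `0` on it (`words_gf`). It is evaluated by Gaussian elimination on a family of matrices
with a rank one perturbation (`master_elim`, `masterSum_excMat`), and at `x_a = z q ^ (N - 1 - a)`
Euler's identity gives the generating function (`wordSum_gf`).

*Closed formula.* All this takes place in rings where `q` and `z` are nilpotent, so that every
series is a finite sum. The resulting recurrence for `A_n` holds in `ℤ[q, t, r]` modulo every power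
of `q`, hence holds there (`rec_poly`). Over the field of fractions it reads `A = R + A * G` for the
power series `R = ∑ r^k z^k / (q; q)_k` and `G = ∑ tq [k - 1]_{tq} z^k / (q; q)_k`. As `G` is
divisible by `z ^ 2`, the Neumann series `R * ∑ G ^ m` gives the formula (`solve_rec`).
-/

open scoped Classical

/-- Descent set of `σ ∈ S_n` (0-based positions). -/
noncomputable def DesSet (n : ℕ) (σ : Equiv.Perm (Fin n)) : Finset ℕ :=
  (Finset.range n).filter fun i =>
    ∃ (h1 : i < n) (h2 : i + 1 < n), σ ⟨i + 1, h2⟩ < σ ⟨i, h1⟩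

/-- Major index. -/
noncomputable def maj (n : ℕ) (σ : Equiv.Perm (Fin n)) : ℕ :=
  ∑ i ∈ DesSet n σ, (i + 1)

/-- Excedance number. -/
noncomputable def exc (n : ℕ) (σ : Equiv.Perm (Fin n)) : ℕ :=
  ((Finset.range n).filter fun i => ∃ h : i < n, i < (σ ⟨i, h⟩ : ℕ)).card

/-- Number of fixed points. -/
noncomputable def fixpts (n : ℕ) (σ : Equiv.Perm (Fin n)) : ℕ :=
  ((Finset.univ : Finset (Fin n)).filter fun i => σ i = i).card

/-- `[m]_x = 1 + x + ⋯ + x^{m−1}`. -/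
def qint {R : Type*} [CommSemiring R] (x : R) (m : ℕ) : R :=
  ∑ i ∈ Finset.range m, x ^ i

/-- Gaussian (q-)binomial coefficient, via the q-Pascal recurrence. -/
def qbinom {R : Type*} [CommSemiring R] (q : R) : ℕ → ℕ → R
  | _, 0 => 1
  | 0, _ + 1 => 0
  | n + 1, k + 1 => qbinom q n k + q ^ (k + 1) * qbinom q n (k + 1)

/-- The q-multinomial coefficient `[k_0 + ⋯ + k_m choose k_0,…,k_m]_q`,
written as a telescoping product of q-binomial coefficients. -/
def qmultinomial {R : Type*} [CommSemiring R] (q : R) (m : ℕ) (k : Fin (m + 1) → ℕ) : R :=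
  ∏ i : Fin (m + 1),
    qbinom q (∑ j ∈ Finset.univ.filter fun j => i ≤ j, k j) (k i)

/-- Three-variable polynomial ring `ℤ[q,t,r]`: `q = X 0`, `t = X 1`, `r = X 2`. -/
abbrev Rqtr : Type := MvPolynomial (Fin 3) ℤ

noncomputable def qv : Rqtr := MvPolynomial.X 0
noncomputable def tv : Rqtr := MvPolynomial.X 1
noncomputable def rv : Rqtr := MvPolynomial.X 2

/-- `A_n^{maj,exc,fix}(q,t,r)`. -/
noncomputable def qEulerPolyFix (n : ℕ) : Rqtr :=
  ∑ σ : Equiv.Perm (Fin n), qv ^ maj n σ * tv ^ exc n σ * rv ^ fixpts n σ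

/-! ### Diagonal coefficients -/

open Polynomial in
lemma binom_geom {R : Type*} [CommRing R] (a : R) (e n : ℕ) :
    (1 - a) * ∑ k ∈ Finset.range n, (k.choose (e + 1) : R) * a ^ (k - (e + 1)) =
      (∑ k ∈ Finset.range n, (k.choose e : R) * a ^ (k - e)) -
        (n.choose (e + 1) : R) * a ^ (n - (e + 1)) := by
  induction n with
  | zero => simp
  | succ n ih =>
    rw [Finset.sum_range_succ, Finset.sum_range_succ, mul_add, ih, Nat.choose_succ_succ]
    rcases Nat.lt_or_ge n (e + 1) with h | h
    · rw [Nat.choose_eq_zero_of_lt h]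
      have : n + 1 - (e + 1) = n - e := by omega
      rw [this]; push_cast; ring
    · obtain ⟨d, rfl⟩ := Nat.exists_eq_add_of_le h
      have h1 : e + 1 + d + 1 - (e + 1) = d + 1 := by omega
      have h2 : e + 1 + d - (e + 1) = d := by omega
      have h3 : e + 1 + d - e = d + 1 := by omega
      rw [h1, h2, h3]; push_cast; ring

/-- A negative binomial series `∑ choose k e * a ^ (k - e) = 1 / (1 - a) ^ (e + 1)`, truncated at
`B`; the factor `L ^ e` kills the error term. -/
lemma nilp_geom {R : Type*} [CommRing R] (B : ℕ) (a L c : R) (hc : c * (1 - a) = 1)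
    (hnil : ∀ i j, B ≤ i + j → a ^ i * L ^ j = 0) (e : ℕ) :
    (∑ k ∈ Finset.range B, (k.choose e : R) * a ^ (k - e)) * L ^ e = c ^ (e + 1) * L ^ e := by
  induction e with
  | zero =>
    have h := mul_neg_geom_sum a B
    have h0 := hnil B 0 (by omega)
    simp only [pow_zero, mul_one] at h0
    simp only [Nat.choose_zero_right, Nat.cast_one, one_mul, Nat.sub_zero, pow_zero, mul_one,
      zero_add, pow_one]
    linear_combination c * h - (∑ k ∈ Finset.range B, a ^ k) * hc - c * h0
  | succ e ih =>
    have h := binom_geom a e B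
    have h0 : (B.choose (e + 1) : R) * a ^ (B - (e + 1)) * L ^ (e + 1) = 0 := by
      rcases Nat.lt_or_ge B (e + 1) with h | h
      · simp [Nat.choose_eq_zero_of_lt h]
      · rw [mul_assoc, hnil _ _ (by omega), mul_zero]
    rw [pow_succ L, ← mul_assoc] at *
    linear_combination c * L ^ e * L * h - (∑ k ∈ Finset.range B,
      (k.choose (e + 1) : R) * a ^ (k - (e + 1))) * L ^ e * L * hc + c * L * ih - c * h0

open Polynomial in
/-- Summing diagonal coefficients against the powers of `L + a X` amounts, up to the factor
`c = 1 / (1 - a)`, to substituting for `X` the solution `c * L` of `X = L + a X`. -/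
lemma diag_extract {R : Type*} [CommRing R] (B : ℕ) (a L c : R) (hc : c * (1 - a) = 1)
    (hnil : ∀ i j, B ≤ i + j → a ^ i * L ^ j = 0) (P : R[X]) :
    ∑ k ∈ Finset.range B, ((C L + C a * X) ^ k * P).coeff k = c * P.eval (c * L) := by
  induction P using Polynomial.induction_on' with
  | add p q hp hq =>
    simp only [mul_add, coeff_add, Finset.sum_add_distrib, hp, hq, eval_add]
  | monomial e b =>
    have key : ∀ k, ((C L + C a * X) ^ k * monomial e b).coeff k =
        (k.choose e : R) * a ^ (k - e) * L ^ e * b := by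
      intro k
      rcases Nat.lt_or_ge k e with h | h
      · rw [← C_mul_X_pow_eq_monomial, ← mul_assoc, coeff_mul_X_pow', if_neg (by omega),
          Nat.choose_eq_zero_of_lt h]
        simp
      · have h1 : ((C L + C a * X) ^ k : R[X]) =
            ∑ m ∈ Finset.range (k + 1), C (L ^ m * a ^ (k - m) * (k.choose m : R)) *
              X ^ (k - m) := by
          rw [add_pow]
          refine Finset.sum_congr rfl fun m _ => ?_
          simp only [C_mul, C_pow, mul_pow, map_natCast]
          ring
        rw [← C_mul_X_pow_eq_monomial, ← mul_assoc, coeff_mul_X_pow', if_pos h, coeff_mul_C, h1,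
          finsetSum_coeff, Finset.sum_eq_single e]
        · rw [coeff_C_mul_X_pow, if_pos rfl]; ring
        · intro m hm hne
          rw [coeff_C_mul_X_pow, if_neg]
          simp only [Finset.mem_range] at hm
          omega
        · intro hm
          exact absurd (Finset.mem_range.2 (by omega)) hm
    simp only [key]
    rw [← Finset.sum_mul, ← Finset.sum_mul, nilp_geom B a L c hc hnil, eval_monomial]
    ring

/-! ### MacMahon's Master Theorem by elimination -/

/-- The linear form `∑ j, M i j * y_j` attached to row `i` of the matrix `M`. -/
noncomputable def rowForm {A : Type*} [CommRing A] {n : ℕ} (M : Fin n → Fin n → A) (i : Fin n) :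
    MvPolynomial (Fin n) A :=
  ∑ j, MvPolynomial.C (M i j) * MvPolynomial.X j

/-- The sum over `p ∈ [0, B)^n` of the coefficient of `y^p` in `∏ i, (∑ j, M i j * y_j) ^ p_i`,
the left side of MacMahon's Master Theorem, truncated at `B`. -/
noncomputable def masterSum {A : Type*} [CommRing A] (B n : ℕ) (M : Fin n → Fin n → A) : A :=
  ∑ p : Fin n → Fin B, MvPolynomial.coeff
    (Finsupp.equivFunOnFinite.symm fun i => (p i : ℕ)) (∏ i, rowForm M i ^ (p i : ℕ))

lemma qint_inv {A : Type*} [CommRing A] {B : ℕ} {y : A} (h : y ^ B = 0) :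
    qint y B * (1 - y) = 1 := by
  have := mul_neg_geom_sum y B
  rw [qint, mul_comm, this, h, sub_zero]

lemma mem_pow_mul {A : Type*} [CommRing A] {B : ℕ} {I : Ideal A} (hI : I ^ B = ⊥) {a L : A}
    (ha : a ∈ I) (hL : L ∈ I) {i j : ℕ} (h : B ≤ i + j) : a ^ i * L ^ j = 0 := by
  have h1 : a ^ i * L ^ j ∈ I ^ (i + j) := by
    rw [pow_add]
    exact Ideal.mul_mem_mul (Ideal.pow_mem_pow ha i) (Ideal.pow_mem_pow hL j)
  have h2 := Ideal.pow_le_pow_right h h1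
  rwa [hI] at h2

lemma pow_eq_zero_of_mem {A : Type*} [CommRing A] {B : ℕ} {I : Ideal A} (hI : I ^ B = ⊥) {a : A}
    (ha : a ∈ I) : a ^ B = 0 := by
  have := Ideal.pow_mem_pow ha B
  rwa [hI] at this

/-- One step of Gaussian elimination: the first variable is removed from the sum in MacMahon's
Master Theorem, which replaces `1 - M` by its Schur complement and splits off the factor
`1 / (1 - M 0 0)`. -/
lemma master_elim {A : Type*} [CommRing A] {B : ℕ} {I : Ideal A} (hI : I ^ B = ⊥) {n : ℕ}
    (M : Fin (n + 1) → Fin (n + 1) → A) (hM : ∀ i j, M i j ∈ I) :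
    masterSum B (n + 1) M = qint (M 0 0) B * masterSum B n
      (fun i j => M i.succ j.succ + M i.succ 0 * qint (M 0 0) B * M 0 j.succ) := by
  classical
  set c := qint (M 0 0) B with hc
  have hcinv : c * (1 - M 0 0) = 1 := qint_inv (pow_eq_zero_of_mem hI (hM 0 0))
  set L : Fin (n + 1) → MvPolynomial (Fin n) A := fun i =>
    ∑ j : Fin n, MvPolynomial.C (M i j.succ) * MvPolynomial.X j with hL
  have hrow : ∀ i, MvPolynomial.finSuccEquiv A n (rowForm M i) =
      Polynomial.C (L i) + Polynomial.C (MvPolynomial.C (M i 0)) * Polynomial.X := by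
    intro i
    rw [rowForm, Fin.sum_univ_succ, map_add, map_sum]
    simp only [map_mul, MvPolynomial.finSuccEquiv_X_zero, MvPolynomial.finSuccEquiv_X_succ, hL,
      map_sum]
    have : ∀ a : A, MvPolynomial.finSuccEquiv A n (MvPolynomial.C a) =
        Polynomial.C (MvPolynomial.C a) := by
      intro a
      simp [MvPolynomial.finSuccEquiv_apply]
    simp only [this]
    ring
  have hrow' : ∀ i : Fin n, rowForm
      (fun i j : Fin n => M i.succ j.succ + M i.succ 0 * c * M 0 j.succ) i =
      L i.succ + MvPolynomial.C (M i.succ 0) * (MvPolynomial.C c * L 0) := by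
    intro i
    simp only [rowForm, hL, Finset.mul_sum, ← Finset.sum_add_distrib]
    refine Finset.sum_congr rfl fun j _ => ?_
    simp only [map_add, map_mul]
    ring
  have hI' : (I.map (MvPolynomial.C (σ := Fin n))) ^ B = ⊥ := by
    rw [← Ideal.map_pow, hI, Ideal.map_bot]
  have hL0 : L 0 ∈ I.map (MvPolynomial.C (σ := Fin n)) :=
    Ideal.sum_mem _ fun j _ => Ideal.mul_mem_right _ _ (Ideal.mem_map_of_mem _ (hM 0 j.succ))
  have ha0 : MvPolynomial.C (M 0 0) ∈ I.map (MvPolynomial.C (σ := Fin n)) :=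
    Ideal.mem_map_of_mem _ (hM 0 0)
  have hcC : MvPolynomial.C (σ := Fin n) c * (1 - MvPolynomial.C (M 0 0)) = 1 := by
    rw [← map_one MvPolynomial.C, ← map_sub, ← map_mul, hcinv]
  have hext := diag_extract B (MvPolynomial.C (M 0 0)) (L 0) (MvPolynomial.C c) hcC
    (fun i j h => mem_pow_mul hI' ha0 hL0 h)
  unfold masterSum
  rw [← (Fin.consEquiv (fun _ => Fin B)).sum_comp, Fintype.sum_prod_type, Finset.sum_comm,
    Finset.mul_sum]
  refine Finset.sum_congr rfl fun p _ => ?_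
  have hterm : ∀ k : Fin B, MvPolynomial.coeff (Finsupp.equivFunOnFinite.symm
        fun i => (((Fin.consEquiv fun _ => Fin B) (k, p) : Fin (n + 1) → Fin B) i : ℕ))
        (∏ i, rowForm M i ^ (((Fin.consEquiv fun _ => Fin B) (k, p) : Fin (n + 1) → Fin B) i : ℕ))
      = MvPolynomial.coeff (Finsupp.equivFunOnFinite.symm fun i => (p i : ℕ))
        (((Polynomial.C (L 0) + Polynomial.C (MvPolynomial.C (M 0 0)) * Polynomial.X) ^ (k : ℕ) *
          ∏ i : Fin n, (Polynomial.C (L i.succ) +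
            Polynomial.C (MvPolynomial.C (M i.succ 0)) * Polynomial.X) ^ (p i : ℕ)).coeff k) := by
    intro k
    have h1 : (Finsupp.equivFunOnFinite.symm
        fun i => (((Fin.consEquiv fun _ => Fin B) (k, p) : Fin (n + 1) → Fin B) i : ℕ)) =
        (Finsupp.equivFunOnFinite.symm fun i => (p i : ℕ)).cons (k : ℕ) := by
      ext i
      refine Fin.cases ?_ (fun j => ?_) i
      · simp
      · simp
    rw [h1, ← MvPolynomial.finSuccEquiv_coeff_coeff, map_prod, Fin.prod_univ_succ]
    simp only [map_pow, hrow, Fin.consEquiv_apply, Fin.cons_zero, Fin.cons_succ]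
  rw [Finset.sum_congr rfl fun k _ => hterm k]
  simp only [Finset.sum_range] at hext
  rw [← MvPolynomial.coeff_sum, hext, MvPolynomial.coeff_C_mul]
  congr 2
  rw [Polynomial.eval_prod]
  refine Finset.prod_congr rfl fun i _ => ?_
  rw [hrow']
  simp

/-! ### The matrix attached to excedances -/

/-- The matrix `v_b` (for `b < a`), `u_b` (for `a < b`), `0` (for `a = b`), with
`u = x / (1 - x)` and `v = t x / (1 - t x)`, plus the rank one perturbation `l * u_b`. -/
def excMat {A : Type*} [CommRing A] (B : ℕ) (t : A) {n : ℕ} (x : Fin n → A) (l : A)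
    (a b : Fin n) : A :=
  (if b < a then t * (x b * qint (t * x b) B) else if a < b then x b * qint (x b) B else 0) +
    l * (x b * qint (x b) B)

/-- The product `∏ 1 / (1 - x_i)`, the value of `det (1 - excMat l)` at `l = -1`. -/
def detA {A : Type*} [CommRing A] (B : ℕ) : (n : ℕ) → (Fin n → A) → A
  | 0, _ => 1
  | n + 1, x => qint (x 0) B * detA B n (fun i => x i.succ)

/-- The coefficient of `-(1 + l)` in `det (1 - excMat l)`, see `masterSum_excMat`. -/
def detG {A : Type*} [CommRing A] (B : ℕ) (t : A) : (n : ℕ) → (Fin n → A) → A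
  | 0, _ => 0
  | n + 1, x => detA B n (fun i => x i.succ) * (x 0 * qint (x 0) B) +
      detG B t n (fun i => x i.succ) * qint (t * x 0) B

/-- The Master Theorem for `excMat`: the sum is the inverse of `det (1 - excMat l)`, which is affine
in `l` because `l` enters through a rank one term. The perturbation makes the induction work:
eliminating the first letter leaves a matrix of the same shape with another value of `l`. -/
lemma masterSum_excMat {A : Type*} [CommRing A] {B : ℕ} {I : Ideal A} (hI : I ^ B = ⊥) (t : A)
    (n : ℕ) (x : Fin n → A) (hx : ∀ i, x i ∈ I) (l : A) (hl : l ∈ I) :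
    masterSum B n (excMat B t x l) * (detA B n x - (1 + l) * detG B t n x) = 1 := by
  induction n generalizing l with
  | zero =>
    have : (Finsupp.equivFunOnFinite.symm fun i : Fin 0 => ((default : Fin 0 → Fin B) i : ℕ)) = 0 :=
      Subsingleton.elim _ _
    simp [masterSum, detA, detG, this]
  | succ n ih =>
    have hu : ∀ b, x b * qint (x b) B ∈ I := fun b => Ideal.mul_mem_right _ _ (hx b)
    have hv : ∀ b, t * (x b * qint (t * x b) B) ∈ I :=
      fun b => Ideal.mul_mem_left _ _ (Ideal.mul_mem_right _ _ (hx b))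
    have hM : ∀ a b, excMat B t x l a b ∈ I := by
      intro a b
      unfold excMat
      refine Ideal.add_mem _ ?_ (Ideal.mul_mem_left _ _ (hu b))
      split_ifs
      · exact hv b
      · exact hu b
      · exact Ideal.zero_mem _
    have h00 : excMat B t x l 0 0 = l * (x 0 * qint (x 0) B) := by simp [excMat]
    set u := x 0 * qint (x 0) B with hu0
    set c := qint (l * u) B with hc
    -- the value of `l` after eliminating the first letter
    set l' := l + (t * (x 0 * qint (t * x 0) B) + l * u) * c * (1 + l) with hl'
    have hM' : (fun i j : Fin n => excMat B t x l i.succ j.succ +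
        excMat B t x l i.succ 0 * qint (excMat B t x l 0 0) B * excMat B t x l 0 j.succ) =
        excMat B t (fun i => x i.succ) l' := by
      funext i j
      rw [h00, hl', ← hc]
      simp only [excMat, Fin.succ_lt_succ_iff, Fin.succ_pos, if_true, Fin.not_lt_zero, if_false,
        ← hu0]
      split_ifs <;> ring
    have hl'I : l' ∈ I := by
      refine Ideal.add_mem _ hl (Ideal.mul_mem_right _ _ (Ideal.mul_mem_right _ _
        (Ideal.add_mem _ (hv 0) (Ideal.mul_mem_left _ _ (hu 0)))))
    have h1 := ih (fun i => x i.succ) (fun i => hx _) l' hl'I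
    rw [master_elim hI _ hM, hM', h00, ← hc]
    have e1 : c * (1 - l * u) = 1 :=
      qint_inv (pow_eq_zero_of_mem hI (Ideal.mul_mem_left _ _ (hu 0)))
    have e2 : qint (x 0) B * (1 - x 0) = 1 := qint_inv (pow_eq_zero_of_mem hI (hx 0))
    have e3 : qint (t * x 0) B * (1 - t * x 0) = 1 :=
      qint_inv (pow_eq_zero_of_mem hI (Ideal.mul_mem_left _ _ (hx 0)))
    simp only [detA, detG, ← hu0]
    set S := masterSum B n (excMat B t (fun i => x i.succ) l')
    set a := detA B n (fun i => x i.succ)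
    set g := detG B t n (fun i => x i.succ)
    set cx := qint (x 0) B
    set ct := qint (t * x 0) B
    have key : c * (cx * a - (1 + l) * (a * u + g * ct)) = a - (1 + l') * g := by
      rw [hl', hu0]
      rw [hu0] at e1
      linear_combination a * (c * e2 + e1) - g * (1 + l) * (c * e3 + e1)
    linear_combination S * key + h1

/-! ### Generating functions of rows -/

/-- The weight of an occurrence of the letter `a` in row `a` that is preceded by `k` other letters
in this row, when `e` letters `a` occur in earlier rows: its rank in the stable sorting is an
anti-excedance, a fixed point or an excedance of the sorting permutation according as `k < e`,
`k = e` or `k > e`. -/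
def gapWt {P : Type*} [CommRing P] (t r : P) (e k : ℕ) : P :=
  if k < e then 1 else if k = e then r else t

/-- The number of letters different from `a` before position `i` of the row `R`. -/
def cntBefore {N m : ℕ} (a : Fin N) (R : Fin m → Fin N) (i : Fin m) : ℕ :=
  ∑ j, if j < i ∧ R j ≠ a then 1 else 0

/-- The number of letters different from `a` in the row `R`. -/
def cntNe {N m : ℕ} (a : Fin N) (R : Fin m → Fin N) : ℕ :=
  ∑ j, if R j ≠ a then 1 else 0

/-- The weight of the row `R` of the letter `a`, where a letter `b ≠ a` has weight `Y b`. -/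
def rowWt {P : Type*} [CommRing P] (t r : P) {N m : ℕ} (Y : Fin N → P) (a : Fin N) (e : ℕ)
    (R : Fin m → Fin N) : P :=
  ∏ i, if R i = a then gapWt t r e (cntBefore a R i) else Y (R i)

/-- The total weight of the rows of length `m` with `p` letters different from `a`. -/
def rowSum {P : Type*} [CommRing P] (t r : P) {N : ℕ} (Y : Fin N → P) (a : Fin N) (e m p : ℕ) : P :=
  ∑ R : Fin m → Fin N, if cntNe a R = p then rowWt t r Y a e R else 0

lemma cntNe_snoc {N m : ℕ} (a b : Fin N) (R : Fin m → Fin N) :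
    cntNe a (Fin.snoc R b : Fin (m + 1) → Fin N) = cntNe a R + if b ≠ a then 1 else 0 := by
  simp [cntNe, Fin.sum_univ_castSucc]

lemma rowWt_snoc {P : Type*} [CommRing P] (t r : P) {N m : ℕ} (Y : Fin N → P) (a b : Fin N)
    (e : ℕ) (R : Fin m → Fin N) :
    rowWt t r Y a e (Fin.snoc R b : Fin (m + 1) → Fin N) =
      rowWt t r Y a e R * if b = a then gapWt t r e (cntNe a R) else Y b := by
  have h1 : ∀ i : Fin m, cntBefore a (Fin.snoc R b : Fin (m + 1) → Fin N) i.castSucc =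
      cntBefore a R i := by
    intro i
    simp [cntBefore, Fin.sum_univ_castSucc, -Finset.sum_boole, Fin.castSucc_lt_castSucc_iff,
      not_lt.2 (Fin.le_last _)]
  have h2 : cntBefore a (Fin.snoc R b : Fin (m + 1) → Fin N) (Fin.last m) = cntNe a R := by
    simp [cntBefore, cntNe, Fin.sum_univ_castSucc, -Finset.sum_boole, Fin.castSucc_lt_last]
  simp [rowWt, Fin.prod_univ_castSucc, h1, h2]

lemma rowSum_zero {P : Type*} [CommRing P] (t r : P) {N : ℕ} (Y : Fin N → P) (a : Fin N)
    (e p : ℕ) : rowSum t r Y a e 0 p = if p = 0 then 1 else 0 := by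
  simp [rowSum, cntNe, rowWt, eq_comm]

/-- Removing the last letter of a row. -/
lemma rowSum_succ {P : Type*} [CommRing P] (t r : P) {N : ℕ} (Y : Fin N → P) (a : Fin N)
    (e m p : ℕ) :
    rowSum t r Y a e (m + 1) p = rowSum t r Y a e m p * gapWt t r e p +
      if p = 0 then 0 else rowSum t r Y a e m (p - 1) * ∑ b ∈ Finset.univ.filter (· ≠ a), Y b := by
  have h1 : rowSum t r Y a e (m + 1) p = ∑ R : Fin m → Fin N, ∑ b : Fin N,
      if cntNe a R + (if b ≠ a then 1 else 0) = p then
        rowWt t r Y a e R * (if b = a then gapWt t r e (cntNe a R) else Y b) else 0 := by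
    rw [rowSum, ← (Fin.snocEquiv (fun _ => Fin N)).sum_comp, Fintype.sum_prod_type,
      Finset.sum_comm]
    refine Finset.sum_congr rfl fun R _ => Finset.sum_congr rfl fun b _ => ?_
    have : (Fin.snocEquiv fun _ => Fin N) (b, R) = (Fin.snoc R b : Fin (m + 1) → Fin N) := rfl
    rw [this, cntNe_snoc, rowWt_snoc]
  rw [h1]
  have h2 : ∀ R : Fin m → Fin N, (∑ b : Fin N,
      if cntNe a R + (if b ≠ a then 1 else 0) = p then
        rowWt t r Y a e R * (if b = a then gapWt t r e (cntNe a R) else Y b) else 0) =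
      (if cntNe a R = p then rowWt t r Y a e R else 0) * gapWt t r e p +
      (if cntNe a R + 1 = p then rowWt t r Y a e R else 0) *
        ∑ b ∈ Finset.univ.filter (· ≠ a), Y b := by
    intro R
    rw [← Finset.sum_filter_add_sum_filter_not Finset.univ (fun b => b = a)]
    congr 1
    · rw [Finset.filter_eq' Finset.univ a, if_pos (Finset.mem_univ a), Finset.sum_singleton]
      by_cases h : cntNe a R = p
      · simp [h]
      · simp [h]
    · rw [Finset.mul_sum]
      refine Finset.sum_congr rfl fun b hb => ?_
      have hb' : b ≠ a := (Finset.mem_filter.1 hb).2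
      simp [hb']
  rw [Finset.sum_congr rfl fun R _ => h2 R, Finset.sum_add_distrib, ← Finset.sum_mul,
    ← Finset.sum_mul]
  congr 1
  split_ifs with hp
  · simp [hp]
  · congr 1
    refine Finset.sum_congr rfl fun R _ => ?_
    have : cntNe a R + 1 = p ↔ cntNe a R = p - 1 := by omega
    simp only [this]

/-- Generating function of a row by length, with a prescribed number `p` of other letters: each of
the `p + 1` gaps contributes a geometric series. -/
lemma rowSum_gf {P : Type*} [CommRing P] {B : ℕ} (t r x : P) (hx : x ^ B = 0) {N : ℕ}
    (Y : Fin N → P) (a : Fin N) (e p : ℕ) :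
    ∑ m ∈ Finset.range B, x ^ m * rowSum t r Y a e m p =
      (x * ∑ b ∈ Finset.univ.filter (· ≠ a), Y b) ^ p *
        ∏ j ∈ Finset.range (p + 1), qint (gapWt t r e j * x) B := by
  set L := ∑ b ∈ Finset.univ.filter (· ≠ a), Y b with hL
  have hshift : ∀ p, ∑ m ∈ Finset.range B, x ^ m * rowSum t r Y a e m p =
      rowSum t r Y a e 0 p +
        ∑ m ∈ Finset.range B, x ^ (m + 1) * rowSum t r Y a e (m + 1) p := by
    intro p
    have h1 := Finset.sum_range_succ' (fun m => x ^ m * rowSum t r Y a e m p) B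
    rw [Finset.sum_range_succ, hx] at h1
    simp only [zero_mul, add_zero, pow_zero, one_mul] at h1
    rw [h1, add_comm]
  have hinv : ∀ p, qint (gapWt t r e p * x) B * (1 - gapWt t r e p * x) = 1 := fun p =>
    qint_inv (by rw [mul_pow, hx, mul_zero])
  induction p with
  | zero =>
    have h := hshift 0
    simp only [rowSum_zero, rowSum_succ, if_true, add_zero] at h
    have h2 : ∑ m ∈ Finset.range B, x ^ (m + 1) * (rowSum t r Y a e m 0 * gapWt t r e 0) =
        (∑ m ∈ Finset.range B, x ^ m * rowSum t r Y a e m 0) * (gapWt t r e 0 * x) := by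
      rw [Finset.sum_mul]
      exact Finset.sum_congr rfl fun m _ => by ring
    rw [h2] at h
    rw [Finset.prod_range_one, pow_zero, one_mul]
    linear_combination qint (gapWt t r e 0 * x) B * h -
      (∑ m ∈ Finset.range B, x ^ m * rowSum t r Y a e m 0) * hinv 0
  | succ p ih =>
    have h := hshift (p + 1)
    simp only [rowSum_zero, rowSum_succ, Nat.add_eq_zero_iff, one_ne_zero, and_false, if_false,
      Nat.add_sub_cancel, zero_add] at h
    have h2 : ∑ m ∈ Finset.range B, x ^ (m + 1) * (rowSum t r Y a e m (p + 1) *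
        gapWt t r e (p + 1) + rowSum t r Y a e m p * L) =
        (∑ m ∈ Finset.range B, x ^ m * rowSum t r Y a e m (p + 1)) * (gapWt t r e (p + 1) * x) +
        (∑ m ∈ Finset.range B, x ^ m * rowSum t r Y a e m p) * (x * L) := by
      rw [Finset.sum_mul, Finset.sum_mul, ← Finset.sum_add_distrib]
      exact Finset.sum_congr rfl fun m _ => by ring
    rw [← hL, h2, ih] at h
    rw [Finset.prod_range_succ]
    linear_combination qint (gapWt t r e (p + 1) * x) B * h -
      (∑ m ∈ Finset.range B, x ^ m * rowSum t r Y a e m (p + 1)) * hinv (p + 1)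

/-- Of the `e + f + 1` gaps of a row, the first `e` have weight `1`, the next one has weight `r`,
and the last `f` have weight `t`. -/
lemma prod_gapWt {P : Type*} [CommRing P] {B : ℕ} (t r x : P) (e f : ℕ) :
    ∏ j ∈ Finset.range (e + f + 1), qint (gapWt t r e j * x) B =
      qint (r * x) B * (qint x B ^ e * qint (t * x) B ^ f) := by
  have h1 : ∏ j ∈ Finset.range e, qint (gapWt t r e j * x) B = qint x B ^ e := by
    rw [Finset.prod_congr rfl (g := fun _ => qint x B), Finset.prod_const, Finset.card_range]
    intro j hj
    simp [gapWt, Finset.mem_range.1 hj]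
  rw [show e + f + 1 = e + (1 + f) by ring, Finset.prod_range_add, h1, Finset.prod_range_add,
    Finset.prod_range_one]
  have h2 : ∏ j ∈ Finset.range f, qint (gapWt t r e (e + (1 + j)) * x) B = qint (t * x) B ^ f := by
    rw [Finset.prod_congr rfl (g := fun _ => qint (t * x) B), Finset.prod_const,
      Finset.card_range]
    intro j _
    simp [gapWt]
  rw [h2]
  simp only [gapWt, add_zero, lt_irrefl, if_false, if_true]
  ring

/-! ### Words and rows -/

/-- The number of occurrences of the letter `b` in `w`. -/
def letterCount {n N : ℕ} (w : Fin n → Fin N) (b : Fin N) : ℕ := ∑ j, if w j = b then 1 else 0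

/-- The position of `j` in the stable sorting of the word `w`. -/
def wordRank {n N : ℕ} (w : Fin n → Fin N) (j : Fin n) : ℕ :=
  (∑ j', if w j' < w j then 1 else 0) + ∑ j', if j' < j ∧ w j' = w j then 1 else 0

/-- The monomial `t ^ exc * r ^ fix` of the permutation sorting `w`, read off from the ranks. -/
def wordWt {A : Type*} [CommRing A] (t r : A) {n N : ℕ} (w : Fin n → Fin N) : A :=
  ∏ j, if wordRank w j < j then t else if wordRank w j = j then r else 1

/-- The number of positions in the rows of the letters smaller than `a`. -/
def rowStart {N : ℕ} (β : Fin N → ℕ) (a : Fin N) : ℕ := ∑ c, if c < a then β c else 0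

/-- The number of letters `a` in the rows above row `a`. -/
def cntAbove {N : ℕ} {β : Fin N → ℕ} (R : ∀ a, Fin (β a) → Fin N) (a : Fin N) : ℕ :=
  ∑ a', if a' < a then letterCount (R a') a else 0

/-- The number of letters `a` in the rows below row `a`. -/
def cntBelow {N : ℕ} {β : Fin N → ℕ} (R : ∀ a, Fin (β a) → Fin N) (a : Fin N) : ℕ :=
  ∑ a', if a < a' then letterCount (R a') a else 0

lemma rowStart_add_le {N : ℕ} (β : Fin N → ℕ) {a b : Fin N} (h : a < b) :
    rowStart β a + β a ≤ rowStart β b := by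
  have h1 : rowStart β a + β a = ∑ c, if c ≤ a then β c else 0 := by
    have : β a = ∑ c, if c = a then β c else 0 := by simp
    rw [rowStart, this, ← Finset.sum_add_distrib]
    refine Finset.sum_congr rfl fun c _ => ?_
    rcases lt_trichotomy c a with h | h | h
    · simp [h, h.ne, h.le]
    · simp [h]
    · simp [h.not_gt, h.ne', h.not_ge]
  rw [h1, rowStart]
  refine Finset.sum_le_sum fun c _ => ?_
  split_ifs <;> omega

lemma finSigma_val {N : ℕ} (β : Fin N → ℕ) (a : Fin N) (i : Fin (β a)) :
    ((finSigmaFinEquiv ⟨a, i⟩ : Fin (∑ a, β a)) : ℕ) = rowStart β a + i := by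
  rw [finSigmaFinEquiv_apply]
  congr 1
  rw [rowStart, ← Finset.sum_filter]
  refine Finset.sum_bij (fun c _ => Fin.castLE a.2.le c) ?_ ?_ ?_ ?_
  · intro c _
    exact Finset.mem_filter.2 ⟨Finset.mem_univ _, c.2⟩
  · intro c _ d _ h
    simpa using h
  · intro c hc
    have : c < a := (Finset.mem_filter.1 hc).2
    exact ⟨⟨c, this⟩, Finset.mem_univ _, rfl⟩
  · intro c _
    rfl

lemma finSigma_lt {N : ℕ} (β : Fin N → ℕ) (a a' : Fin N) (i : Fin (β a)) (i' : Fin (β a')) :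
    (finSigmaFinEquiv ⟨a', i'⟩ : Fin (∑ a, β a)) < finSigmaFinEquiv ⟨a, i⟩ ↔
      a' < a ∨ ∃ h : a' = a, Fin.cast (by rw [h]) i' < i := by
  rw [Fin.lt_def, finSigma_val, finSigma_val]
  rcases lt_trichotomy a' a with h | h | h
  · have := rowStart_add_le β h
    have := i'.2
    simp only [h, true_or, iff_true]
    omega
  · subst h
    constructor
    · intro h
      exact Or.inr ⟨rfl, Fin.lt_def.2 (by simpa using h)⟩
    · rintro (h | ⟨_, h⟩)
      · exact absurd h (lt_irrefl _)
      · simpa using Fin.lt_def.1 h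
  · have := rowStart_add_le β h
    have := i.2
    simp only [h.not_gt, h.ne', false_or, IsEmpty.exists_iff, iff_false]
    omega

/-- The word obtained by concatenating rows. -/
def ofRows {N : ℕ} {β : Fin N → ℕ} (R : ∀ a, Fin (β a) → Fin N) : Fin (∑ a, β a) → Fin N :=
  fun j => R (finSigmaFinEquiv.symm j).1 (finSigmaFinEquiv.symm j).2

lemma ofRows_apply {N : ℕ} {β : Fin N → ℕ} (R : ∀ a, Fin (β a) → Fin N) (a : Fin N)
    (i : Fin (β a)) : ofRows R (finSigmaFinEquiv ⟨a, i⟩) = R a i := by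
  have : ∀ k : Σ a, Fin (β a), k = ⟨a, i⟩ → R k.1 k.2 = R a i := by rintro k rfl; rfl
  exact this _ (Equiv.symm_apply_apply _ _)

lemma ofRows_bijective {N : ℕ} (β : Fin N → ℕ) :
    Function.Bijective (ofRows : (∀ a, Fin (β a) → Fin N) → Fin (∑ a, β a) → Fin N) := by
  constructor
  · intro R R' h
    funext a i
    have := congrFun h (finSigmaFinEquiv ⟨a, i⟩)
    rwa [ofRows_apply, ofRows_apply] at this
  · intro w
    exact ⟨fun a i => w (finSigmaFinEquiv ⟨a, i⟩), by funext j; simp [ofRows]⟩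

lemma sum_rows {M : Type*} [AddCommMonoid M] {N : ℕ} (β : Fin N → ℕ) (f : Fin (∑ a, β a) → M) :
    ∑ j, f j = ∑ a, ∑ i : Fin (β a), f (finSigmaFinEquiv ⟨a, i⟩) := by
  rw [← finSigmaFinEquiv.sum_comp, Fintype.sum_sigma]

lemma prod_rows {M : Type*} [CommMonoid M] {N : ℕ} (β : Fin N → ℕ) (f : Fin (∑ a, β a) → M) :
    ∏ j, f j = ∏ a, ∏ i : Fin (β a), f (finSigmaFinEquiv ⟨a, i⟩) := by
  rw [← finSigmaFinEquiv.prod_comp, Fintype.prod_sigma]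

lemma letterCount_ofRows {N : ℕ} {β : Fin N → ℕ} (R : ∀ a, Fin (β a) → Fin N) (b : Fin N) :
    letterCount (ofRows R) b = ∑ a, letterCount (R a) b := by
  simp only [letterCount, sum_rows, ofRows_apply]

lemma letterCount_add_cntNe {N m : ℕ} (a : Fin N) (R : Fin m → Fin N) :
    letterCount R a + cntNe a R = m := by
  rw [letterCount, cntNe, ← Finset.sum_add_distrib]
  have : ∀ j, ((if R j = a then 1 else 0) + if R j ≠ a then 1 else 0) = 1 := by
    intro j
    by_cases h : R j = a <;> simp [h]
  simp only [this]
  simp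

lemma sum_letterCount {N : ℕ} {β : Fin N → ℕ} (R : ∀ a, Fin (β a) → Fin N) (b : Fin N) :
    ∑ a, letterCount (R a) b = letterCount (R b) b + cntAbove R b + cntBelow R b := by
  have : letterCount (R b) b = ∑ a, if a = b then letterCount (R a) b else 0 := by simp
  rw [this, cntAbove, cntBelow, ← Finset.sum_add_distrib, ← Finset.sum_add_distrib]
  refine Finset.sum_congr rfl fun c _ => ?_
  rcases lt_trichotomy c b with h | h | h
  · simp [h, h.ne, h.not_gt]
  · simp [h]
  · simp [h.not_gt, h.ne', h]

/-- A filling of the rows has content `β` precisely when, for each letter, the row of this letter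
contains as many foreign letters as there are copies of the letter in other rows. -/
lemma content_iff {N : ℕ} {β : Fin N → ℕ} (R : ∀ a, Fin (β a) → Fin N) :
    letterCount (ofRows R) = β ↔ ∀ b, cntNe b (R b) = cntAbove R b + cntBelow R b := by
  rw [funext_iff]
  refine forall_congr' fun b => ?_
  rw [letterCount_ofRows, sum_letterCount]
  have := letterCount_add_cntNe b (R b)
  omega

lemma sum_lt_eq_rowStart {n N : ℕ} (w : Fin n → Fin N) (b : Fin N) :
    (∑ j', if w j' < b then 1 else 0) = rowStart (letterCount w) b := by
  rw [rowStart]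
  simp only [letterCount, ← Finset.sum_filter (fun c => c < b)]
  rw [Finset.sum_comm]
  refine Finset.sum_congr rfl fun j _ => ?_
  simp

/-- The weight of a word of content `β` factors over rows. A letter below (above) the letter of its
row has rank less (greater) than its position; for a letter `a` in row `a` the two differ by the
difference between the number of foreign letters before it in the row and `cntAbove`. -/
lemma wordWt_ofRows {A : Type*} [CommRing A] (t r : A) {N : ℕ} {β : Fin N → ℕ}
    (R : ∀ a, Fin (β a) → Fin N) (h : letterCount (ofRows R) = β) :
    wordWt t r (ofRows R) = ∏ a, ∏ i, if R a i = a then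
      gapWt t r (cntAbove R a) (cntBefore a (R a) i) else if R a i < a then t else 1 := by
  rw [wordWt, prod_rows]
  refine Finset.prod_congr rfl fun a _ => Finset.prod_congr rfl fun i _ => ?_
  have hrank : wordRank (ofRows R) (finSigmaFinEquiv ⟨a, i⟩) = rowStart β (R a i) +
      ∑ j', if j' < finSigmaFinEquiv ⟨a, i⟩ ∧ ofRows R j' = R a i then 1 else 0 := by
    rw [wordRank, ofRows_apply, sum_lt_eq_rowStart, h]
  have hi := i.2
  rcases lt_trichotomy (R a i) a with hlt | heq | hgt
  · have h1 : (∑ j', if j' < finSigmaFinEquiv ⟨a, i⟩ ∧ ofRows R j' = R a i then 1 else 0) <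
        β (R a i) := by
      conv_rhs => rw [← h]
      rw [letterCount]
      refine Finset.sum_lt_sum (fun j _ => ?_) ⟨finSigmaFinEquiv ⟨a, i⟩, Finset.mem_univ _, ?_⟩
      · by_cases hj : ofRows R j = R a i
        · simp only [hj, and_true, if_true]
          split_ifs <;> simp
        · simp [hj]
      · simp [ofRows_apply]
    have h2 := rowStart_add_le β hlt
    rw [hrank, finSigma_val, if_pos (by omega), if_neg hlt.ne, if_pos hlt]
  · have h1 : (∑ j', if j' < finSigmaFinEquiv ⟨a, i⟩ ∧ ofRows R j' = R a i then 1 else 0) =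
        cntAbove R a + ∑ i', if i' < i ∧ R a i' = a then 1 else 0 := by
      have h3 : (∑ i', if i' < i ∧ R a i' = a then 1 else 0) = ∑ a', if h : a' = a then
          ∑ i', (if Fin.cast (by rw [h]) i' < i ∧ R a' i' = a then 1 else 0) else 0 := by
        rw [Finset.sum_eq_single a]
        · simp
        · intro b _ hb
          simp [hb]
        · simp
      rw [h3, cntAbove, ← Finset.sum_add_distrib, sum_rows]
      refine Finset.sum_congr rfl fun a' _ => ?_
      simp only [finSigma_lt, ofRows_apply, heq]
      rcases lt_trichotomy a' a with h | h | h
      · simp [h, h.ne, letterCount]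
      · subst h
        simp
      · simp [h.not_gt, h.ne']
    have h2 : (i : ℕ) = (∑ i', if i' < i ∧ R a i' = a then 1 else 0) + cntBefore a (R a) i := by
      rw [cntBefore, ← Finset.sum_add_distrib]
      have : ∀ i' : Fin (β a), ((if i' < i ∧ R a i' = a then 1 else 0) +
          if i' < i ∧ R a i' ≠ a then 1 else 0) = if i' < i then 1 else 0 := by
        intro i'
        by_cases h1 : i' < i <;> by_cases h2 : R a i' = a <;> simp [h1, h2]
      simp only [this]
      rw [← Finset.card_filter, Finset.filter_gt_eq_Iio, Fin.card_Iio]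
    rw [hrank, finSigma_val, if_pos heq, h1, heq, gapWt]
    rcases lt_trichotomy (cntAbove R a) (cntBefore a (R a) i) with h3 | h3 | h3
    · rw [if_pos (by omega), if_neg (by omega), if_neg (by omega)]
    · rw [if_neg (by omega), if_pos (by omega), if_neg (by omega), if_pos (by omega)]
    · rw [if_neg (by omega), if_neg (by omega), if_pos (by omega)]
  · have h2 := rowStart_add_le β hgt
    rw [hrank, finSigma_val, if_neg (by omega), if_neg (by omega), if_neg hgt.ne',
      if_neg hgt.not_gt]

/-! ### Words by content -/

/-- The variable (with its weight) recording a letter `b ≠ a` in row `a`: `(b, true)` when row `a`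
lies above row `b`, and `(b, false)` when it lies below. -/
noncomputable def letterVar {A : Type*} [CommRing A] (t : A) {N : ℕ} (a b : Fin N) :
    MvPolynomial (Fin N × Bool) A :=
  if b < a then MvPolynomial.C t * MvPolynomial.X (b, false)
  else if a < b then MvPolynomial.X (b, true) else 0

/-- A box of exponents seen as a finitely supported function. -/
noncomputable def toExp {α : Type*} [Finite α] {B : ℕ} (s : α → Fin B) : α →₀ ℕ :=
  Finsupp.equivFunOnFinite.symm fun k => (s k : ℕ)

lemma toExp_apply {α : Type*} [Finite α] {B : ℕ} (s : α → Fin B) (k : α) :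
    toExp s k = (s k : ℕ) := rfl

/-- The exponents of the variables recorded by the rows. -/
noncomputable def cntVec {N : ℕ} {β : Fin N → ℕ} (R : ∀ a, Fin (β a) → Fin N) :
    Fin N × Bool →₀ ℕ :=
  Finsupp.equivFunOnFinite.symm fun k => if k.2 then cntAbove R k.1 else cntBelow R k.1

lemma gapWt_C {σ A : Type*} [CommRing A] (t r : A) (e k : ℕ) :
    gapWt (MvPolynomial.C (σ := σ) t) (MvPolynomial.C r) e k = MvPolynomial.C (gapWt t r e k) := by
  unfold gapWt
  split_ifs <;> simp

lemma prod_letters {M : Type*} [CommMonoid M] {n N : ℕ} (w : Fin n → Fin N) (f : Fin N → M) :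
    ∏ i, f (w i) = ∏ b, f b ^ letterCount w b := by
  have : ∀ b, f b ^ letterCount w b = ∏ i, if w i = b then f b else 1 := by
    intro b
    rw [letterCount, ← Finset.prod_pow_eq_pow_sum]
    refine Finset.prod_congr rfl fun i _ => ?_
    split_ifs <;> simp
  simp only [this]
  rw [Finset.prod_comm]
  simp

/-- The row weights with variables `letterVar` multiply to a monomial recording `cntVec`. -/
lemma prod_rowWt {A : Type*} [CommRing A] (t r : A) {N : ℕ} {β : Fin N → ℕ} (e : Fin N → ℕ)
    (R : ∀ a, Fin (β a) → Fin N) :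
    ∏ a, rowWt (MvPolynomial.C t) (MvPolynomial.C r) (letterVar t a) a (e a) (R a) =
      MvPolynomial.monomial (cntVec R) (∏ a, ∏ i, if R a i = a then
        gapWt t r (e a) (cntBefore a (R a) i) else if R a i < a then t else 1) := by
  have h1 : ∀ a i, (if R a i = a then
      gapWt (MvPolynomial.C (σ := Fin N × Bool) t) (MvPolynomial.C r) (e a) (cntBefore a (R a) i)
        else letterVar t a (R a i)) =
      MvPolynomial.C (if R a i = a then gapWt t r (e a) (cntBefore a (R a) i) else
        if R a i < a then t else 1) *
      (fun b => if b < a then MvPolynomial.X (b, false) else if a < b then MvPolynomial.X (b, true)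
        else 1) (R a i) := by
    intro a i
    rcases lt_trichotomy (R a i) a with h | h | h
    · simp [h, h.ne, letterVar]
    · simp [h, gapWt_C]
    · simp [h, h.ne', h.not_gt, letterVar]
  simp only [rowWt, h1, Finset.prod_mul_distrib, ← map_prod]
  rw [MvPolynomial.monomial_eq, Finsupp.prod_fintype _ _ (fun _ => pow_zero _),
    Fintype.prod_prod_type]
  congr 1
  have h2 : ∀ a, ∏ i, (if R a i < a then MvPolynomial.X (R a i, false) else
      if a < R a i then MvPolynomial.X (R a i, true) else 1 : MvPolynomial (Fin N × Bool) A) =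
      ∏ b, (if b < a then MvPolynomial.X (b, false) else
      if a < b then MvPolynomial.X (b, true) else 1) ^ letterCount (R a) b := fun a =>
    prod_letters (R a) (fun b => if b < a then MvPolynomial.X (b, false) else
      if a < b then MvPolynomial.X (b, true) else 1)
  rw [Finset.prod_congr rfl fun a _ => h2 a]
  rw [Finset.prod_comm]
  refine Finset.prod_congr rfl fun b _ => ?_
  simp only [Fintype.prod_bool, cntVec, Finsupp.equivFunOnFinite_symm_apply_apply, if_true,
    Bool.false_eq_true, if_false, cntAbove, cntBelow, ← Finset.prod_pow_eq_pow_sum]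
  rw [← Finset.prod_mul_distrib]
  refine Finset.prod_congr rfl fun a _ => ?_
  rcases lt_trichotomy b a with h | h | h
  · simp [h, h.not_gt]
  · simp [h]
  · simp [h, h.not_gt]

/-- The total weight of the words with content `β`. -/
def contentSum {A : Type*} [CommRing A] (t r : A) {N : ℕ} (β : Fin N → ℕ) : A :=
  ∑ w : Fin (∑ a, β a) → Fin N, if letterCount w = β then wordWt t r w else 0

/-- Cutting a word into rows: the condition on the content becomes a coefficient extraction, where
`s (a, true)` and `s (a, false)` are the numbers of letters `a` above and below row `a`. -/
lemma contentSum_eq {A : Type*} [CommRing A] (t r : A) {N B : ℕ} (β : Fin N → ℕ)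
    (hβ : ∀ a, β a < B) :
    contentSum t r β = ∑ s : Fin N × Bool → Fin B, MvPolynomial.coeff (toExp s)
      (∏ a, rowSum (MvPolynomial.C t) (MvPolynomial.C r) (letterVar t a) a (s (a, true)) (β a)
        (s (a, true) + s (a, false))) := by
  have h1 : contentSum t r β = ∑ R : ∀ a, Fin (β a) → Fin N,
      if letterCount (ofRows R) = β then wordWt t r (ofRows R) else 0 := by
    rw [contentSum]
    exact (Function.Bijective.sum_comp (ofRows_bijective β)
      (fun w => if letterCount w = β then wordWt t r w else 0)).symm
  simp only [rowSum, Finset.prod_univ_sum, Fintype.piFinset_univ, MvPolynomial.coeff_sum]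
  rw [h1, Finset.sum_comm]
  refine Finset.sum_congr rfl fun R _ => ?_
  simp only [Finset.prod_ite_zero, Finset.mem_univ, true_imp_iff, prod_rowWt,
    apply_ite (MvPolynomial.coeff _), MvPolynomial.coeff_zero, MvPolynomial.coeff_monomial]
  by_cases h : letterCount (ofRows R) = β
  · have hc := (content_iff R).1 h
    have hlt : ∀ k, cntVec R k < B := by
      rintro ⟨b, ε⟩
      have h2 := hc b
      have h3 := letterCount_add_cntNe b (R b)
      have h4 := hβ b
      cases ε <;> simp [cntVec] <;> omega
    rw [if_pos h, wordWt_ofRows t r R h, Finset.sum_eq_single (fun k => ⟨cntVec R k, hlt k⟩)]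
    · have h5 : cntVec R = toExp (fun k => (⟨cntVec R k, hlt k⟩ : Fin B)) := by
        ext k; simp [toExp_apply]
      have h6 : ∀ b, cntVec R (b, true) = cntAbove R b := fun b => by simp [cntVec]
      have h7 : ∀ b, cntVec R (b, false) = cntBelow R b := fun b => by simp [cntVec]
      rw [if_pos, if_pos h5]
      · simp only [h6]
      · simpa [h6, h7] using hc
    · intro s _ hs
      split_ifs with h2 h3
      · exfalso
        apply hs
        funext k
        ext
        simp [h3, toExp_apply]
      · rfl
      · rfl
    · simp
  · rw [if_neg h, eq_comm]
    refine Finset.sum_eq_zero fun s _ => ?_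
    split_ifs with h2 h3
    · exfalso
      apply h
      rw [content_iff]
      intro b
      rw [h2 b, ← toExp_apply s, ← toExp_apply s, ← h3]
      simp [cntVec]
    · rfl
    · rfl

lemma map_qint {A P : Type*} [CommRing A] [CommRing P] (f : A →+* P) (y : A) (B : ℕ) :
    f (qint y B) = qint (f y) B := by
  simp [qint]

/-- Coefficients after identifying the two variables `(b, true)` and `(b, false)`. -/
lemma coeff_merge {A : Type*} [CommRing A] {N B : ℕ} (u v : Fin N → A)
    (Q : MvPolynomial (Fin N × Bool) A) (p : Fin N → Fin B) :
    MvPolynomial.coeff (toExp p) (MvPolynomial.aeval (fun k : Fin N × Bool =>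
      MvPolynomial.C (if k.2 then u k.1 else v k.1) * MvPolynomial.X k.1) Q) =
    ∑ s : Fin N × Bool → Fin B, if ∀ b, (s (b, true) : ℕ) + s (b, false) = p b then
      (∏ b, u b ^ (s (b, true) : ℕ) * v b ^ (s (b, false) : ℕ)) * MvPolynomial.coeff (toExp s) Q
      else 0 := by
  induction Q using MvPolynomial.induction_on' with
  | add Q Q' h h' =>
    rw [map_add, MvPolynomial.coeff_add, h, h', ← Finset.sum_add_distrib]
    refine Finset.sum_congr rfl fun s _ => ?_
    split_ifs
    · rw [MvPolynomial.coeff_add, mul_add]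
    · simp
  | monomial m a =>
    have h1 : MvPolynomial.aeval (fun k : Fin N × Bool =>
        MvPolynomial.C (if k.2 then u k.1 else v k.1) * MvPolynomial.X k.1)
        (MvPolynomial.monomial m a) = MvPolynomial.monomial
          (Finsupp.equivFunOnFinite.symm fun b => m (b, true) + m (b, false))
          (a * ∏ b, u b ^ m (b, true) * v b ^ m (b, false)) := by
      rw [MvPolynomial.aeval_monomial, Finsupp.prod_fintype _ _ (fun _ => pow_zero _),
        Fintype.prod_prod_type, MvPolynomial.monomial_eq,
        Finsupp.prod_fintype _ _ (fun _ => pow_zero _), map_mul, mul_assoc, map_prod,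
        ← Finset.prod_mul_distrib, MvPolynomial.algebraMap_eq]
      congr 1
      refine Finset.prod_congr rfl fun b _ => ?_
      simp only [Fintype.prod_bool, if_true, Bool.false_eq_true, if_false, map_mul, map_pow,
        Finsupp.equivFunOnFinite_symm_apply_apply]
      ring
    rw [h1, MvPolynomial.coeff_monomial]
    simp only [MvPolynomial.coeff_monomial]
    by_cases h : ∀ b, m (b, true) + m (b, false) = p b
    · have hlt : ∀ k, m k < B := by
        rintro ⟨b, ε⟩
        have := h b
        have := (p b).2
        cases ε <;> omega
      rw [if_pos, Finset.sum_eq_single (fun k => ⟨m k, hlt k⟩)]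
      · have h5 : m = toExp (fun k => (⟨m k, hlt k⟩ : Fin B)) := by
          ext k; simp [toExp_apply]
        rw [if_pos (by simpa using h), if_pos h5, mul_comm]
      · intro s _ hs
        split_ifs with h2 h3
        · exfalso
          apply hs
          funext k
          ext
          simp [h3, toExp_apply]
        · simp
        · rfl
      · simp
      · ext b
        simp [toExp_apply, h]
    · rw [if_neg, eq_comm]
      · refine Finset.sum_eq_zero fun s _ => ?_
        split_ifs with h2 h3
        · exfalso
          apply h
          intro b
          rw [h3, toExp_apply, toExp_apply, h2]
        · simp
        · rfl
      · intro h2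
        apply h
        intro b
        rw [← toExp_apply p, ← h2]
        simp

/-- The generating function of words by content. Summing each row over its length produces geometric
series, and the remaining coefficient extraction is the Master Theorem sum for `excMat`. -/
lemma words_gf {A : Type*} [CommRing A] {B : ℕ} {I : Ideal A} (hI : I ^ B = ⊥) (t r : A) {N : ℕ}
    (x : Fin N → A) (hx : ∀ a, x a ∈ I) :
    ∑ β : Fin N → Fin B, (∏ a, x a ^ (β a : ℕ)) * contentSum t r (fun a => (β a : ℕ)) =
      (∏ a, qint (r * x a) B) * masterSum B N (excMat B t x 0) := by
  set L : Fin N → MvPolynomial (Fin N × Bool) A := fun a =>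
    ∑ b ∈ Finset.univ.filter (· ≠ a), letterVar t a b with hL
  have hxB : ∀ a, x a ^ B = 0 := fun a => pow_eq_zero_of_mem hI (hx a)
  -- the sum over the row lengths, for fixed numbers of letters above and below their rows
  have h1 : ∀ s : Fin N × Bool → Fin B, ∑ β : Fin N → Fin B, (∏ a, x a ^ (β a : ℕ)) *
      MvPolynomial.coeff (toExp s) (∏ a, rowSum (MvPolynomial.C t) (MvPolynomial.C r)
        (letterVar t a) a (s (a, true)) (β a) (s (a, true) + s (a, false))) =
      (∏ a, qint (r * x a) B) * ((∏ a, (x a * qint (x a) B) ^ (s (a, true) : ℕ) *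
        (x a * qint (t * x a) B) ^ (s (a, false) : ℕ)) *
        MvPolynomial.coeff (toExp s) (∏ a, L a ^ ((s (a, true) : ℕ) + s (a, false)))) := by
    intro s
    have h2 : ∀ a, ∑ m : Fin B, MvPolynomial.C (x a) ^ (m : ℕ) *
        rowSum (MvPolynomial.C t) (MvPolynomial.C r) (letterVar t a) a (s (a, true)) m
          (s (a, true) + s (a, false)) = MvPolynomial.C (qint (r * x a) B *
          ((x a * qint (x a) B) ^ (s (a, true) : ℕ) *
          (x a * qint (t * x a) B) ^ (s (a, false) : ℕ))) *
          L a ^ ((s (a, true) : ℕ) + s (a, false)) := by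
      intro a
      rw [← Finset.sum_range (fun m => MvPolynomial.C (x a) ^ m *
        rowSum (MvPolynomial.C t) (MvPolynomial.C r) (letterVar t a) a (s (a, true)) m
          (s (a, true) + s (a, false))), rowSum_gf _ _ _ (by rw [← map_pow, hxB, map_zero]),
        prod_gapWt]
      simp only [hL, map_mul, map_pow, map_qint]
      ring
    simp only [← MvPolynomial.coeff_C_mul]
    rw [← MvPolynomial.coeff_sum]
    have h3 : ∑ β : Fin N → Fin B, MvPolynomial.C (∏ a, x a ^ (β a : ℕ)) *
        ∏ a, rowSum (MvPolynomial.C t) (MvPolynomial.C r)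
        (letterVar t a) a (s (a, true)) (β a) (s (a, true) + s (a, false)) =
        ∏ a, ∑ m : Fin B, MvPolynomial.C (x a) ^ (m : ℕ) *
        rowSum (MvPolynomial.C t) (MvPolynomial.C r) (letterVar t a) a (s (a, true)) m
          (s (a, true) + s (a, false)) := by
      rw [Finset.prod_univ_sum, Fintype.piFinset_univ]
      refine Finset.sum_congr rfl fun β _ => ?_
      rw [map_prod, ← Finset.prod_mul_distrib]
      simp
    rw [h3, Finset.prod_congr rfl fun a _ => h2 a, Finset.prod_mul_distrib, ← map_prod,
      Finset.prod_mul_distrib, map_mul, mul_assoc]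
  have h4 : ∑ β : Fin N → Fin B, (∏ a, x a ^ (β a : ℕ)) * contentSum t r (fun a => (β a : ℕ)) =
      (∏ a, qint (r * x a) B) * ∑ s : Fin N × Bool → Fin B,
        ((∏ a, (x a * qint (x a) B) ^ (s (a, true) : ℕ) *
        (x a * qint (t * x a) B) ^ (s (a, false) : ℕ)) *
        MvPolynomial.coeff (toExp s) (∏ a, L a ^ ((s (a, true) : ℕ) + s (a, false)))) := by
    rw [Finset.mul_sum, ← Finset.sum_congr rfl fun s _ => h1 s, Finset.sum_comm]
    refine Finset.sum_congr rfl fun β _ => ?_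
    rw [contentSum_eq t r (fun a => (β a : ℕ)) (fun a => (β a).2), Finset.mul_sum]
  rw [h4]
  congr 1
  have h5 : ∀ a, rowForm (excMat B t x 0) a = MvPolynomial.aeval (fun k : Fin N × Bool =>
      MvPolynomial.C (if k.2 then x k.1 * qint (x k.1) B else x k.1 * qint (t * x k.1) B) *
        MvPolynomial.X k.1) (L a) := by
    intro a
    rw [hL, map_sum, Finset.sum_filter, rowForm]
    refine Finset.sum_congr rfl fun b _ => ?_
    rcases lt_trichotomy b a with h | h | h
    · simp [excMat, letterVar, h, h.ne, mul_assoc, MvPolynomial.algebraMap_eq]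
    · simp [excMat, h]
    · simp [excMat, letterVar, h, h.ne', h.not_gt]
  rw [masterSum]
  have h6 : ∀ p : Fin N → Fin B, MvPolynomial.coeff
      (Finsupp.equivFunOnFinite.symm fun i => (p i : ℕ))
      (∏ i, rowForm (excMat B t x 0) i ^ (p i : ℕ)) = ∑ s : Fin N × Bool → Fin B,
      if ∀ b, (s (b, true) : ℕ) + s (b, false) = p b then
        (∏ a, (x a * qint (x a) B) ^ (s (a, true) : ℕ) *
        (x a * qint (t * x a) B) ^ (s (a, false) : ℕ)) *
        MvPolynomial.coeff (toExp s) (∏ a, L a ^ ((s (a, true) : ℕ) + s (a, false))) else 0 := by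
    intro p
    have h7 := coeff_merge (fun b => x b * qint (x b) B) (fun b => x b * qint (t * x b) B)
      (∏ a, L a ^ (p a : ℕ)) p
    simp only [map_prod, map_pow, ← h5] at h7
    refine h7.trans (Finset.sum_congr rfl fun s _ => ?_)
    split_ifs with h
    · simp only [h]
    · rfl
  rw [Finset.sum_congr rfl fun p _ => h6 p, Finset.sum_comm]
  refine Finset.sum_congr rfl fun s _ => ?_
  by_cases h : ∀ b, (s (b, true) : ℕ) + s (b, false) < B
  · rw [Finset.sum_eq_single (fun b => ⟨_, h b⟩)]
    · simp
    · intro p _ hp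
      rw [if_neg]
      intro h8
      apply hp
      funext b
      ext
      rw [← h8]
    · simp
  · -- exponents outside the box `[0, B)^N` have a coefficient in `I ^ B = ⊥`
    push Not at h
    obtain ⟨b, hb⟩ := h
    have h9 : (∏ a, (x a * qint (x a) B) ^ (s (a, true) : ℕ) *
        (x a * qint (t * x a) B) ^ (s (a, false) : ℕ)) = 0 := by
      refine Finset.prod_eq_zero (Finset.mem_univ b) ?_
      exact mem_pow_mul hI (Ideal.mul_mem_right _ _ (hx b)) (Ideal.mul_mem_right _ _ (hx b)) hb
    simp [h9]

/-! ### The principal specialization -/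

/-- The q-Pochhammer symbol `(q; q)_n`. -/
def qpoch {A : Type*} [CommRing A] (q : A) (n : ℕ) : A := ∏ i ∈ Finset.range n, (1 - q ^ (i + 1))

/-- The inverse of `(q; q)_n` when `q ^ M = 0`. -/
def qpochInv {A : Type*} [CommRing A] (q : A) (M n : ℕ) : A :=
  ∏ i ∈ Finset.range n, qint (q ^ (i + 1)) M

/-- The truncated product `∏ 1 / (1 - y * q ^ a)` over `a < n`. -/
def geomProd {A : Type*} [CommRing A] (B : ℕ) (q : A) (n : ℕ) (y : A) : A :=
  ∏ a ∈ Finset.range n, qint (y * q ^ a) B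

lemma qpochInv_mul {A : Type*} [CommRing A] {q : A} {M : ℕ} (hq : q ^ M = 0) (n : ℕ) :
    qpochInv q M n * qpoch q n = 1 := by
  rw [qpochInv, qpoch, ← Finset.prod_mul_distrib]
  refine Finset.prod_eq_one fun i _ => qint_inv ?_
  rw [← pow_mul, mul_comm, pow_mul, hq, zero_pow (Nat.succ_ne_zero i)]

lemma qpochInv_succ {A : Type*} [CommRing A] {q : A} {M : ℕ} (hq : q ^ M = 0) (n : ℕ) :
    qpochInv q M (n + 1) * (1 - q ^ (n + 1)) = qpochInv q M n := by
  rw [qpochInv, Finset.prod_range_succ, mul_assoc, qint_inv, mul_one, qpochInv]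
  rw [← pow_mul, mul_comm, pow_mul, hq, zero_pow (Nat.succ_ne_zero n)]

/-- Euler's identity `∏ 1 / (1 - z q^a) = ∑ z^k / (q; q)_k`, for nilpotent `q` and `z`. -/
lemma geomProd_eq {A : Type*} [CommRing A] {q : A} {M B : ℕ} (hq : q ^ M = 0) (hB : B ≠ 0)
    (z : A) (hz : z ^ B = 0) :
    geomProd B q M z = ∑ k ∈ Finset.range B, qpochInv q M k * z ^ k := by
  set g : A → A := fun z => ∑ k ∈ Finset.range B, qpochInv q M k * z ^ k with hg
  obtain ⟨B, rfl⟩ := Nat.exists_eq_succ_of_ne_zero hB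
  have h0 : g 0 = 1 := by
    simp [hg, Finset.sum_range_succ', qpochInv]
  have h1 : ∀ y : A, y ^ (B + 1) = 0 → g y * (1 - y) = g (y * q) := by
    intro y hy
    have e1 : g y * y = ∑ k ∈ Finset.range B, qpochInv q M k * y ^ (k + 1) := by
      simp only [hg, Finset.sum_mul]
      rw [Finset.sum_range_succ, mul_assoc, ← pow_succ, hy, mul_zero, add_zero]
      exact Finset.sum_congr rfl fun k _ => by ring
    rw [mul_sub, mul_one, e1]
    simp only [hg]
    rw [Finset.sum_range_succ', Finset.sum_range_succ' (fun k => qpochInv q M k * (y * q) ^ k)]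
    simp only [pow_zero, mul_one]
    rw [add_sub_right_comm, ← Finset.sum_sub_distrib]
    congr 1
    refine Finset.sum_congr rfl fun k _ => ?_
    rw [← qpochInv_succ hq k]
    ring
  -- iterating the functional equation until `q ^ n = 0`
  have h2 : ∀ n, g z = geomProd (B + 1) q n z * g (z * q ^ n) := by
    intro n
    induction n with
    | zero => simp [geomProd]
    | succ n ih =>
      have hz' : (z * q ^ n) ^ (B + 1) = 0 := by rw [mul_pow, hz, zero_mul]
      have h3 := h1 (z * q ^ n) hz'
      have h4 := qint_inv hz'
      rw [ih, geomProd, geomProd, Finset.prod_range_succ, pow_succ, ← mul_assoc z, ← h3]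
      linear_combination (-(∏ a ∈ Finset.range n, qint (z * q ^ a) (B + 1)) * g (z * q ^ n)) * h4
  have h3 := h2 M
  rw [hq, mul_zero, h0, mul_one] at h3
  exact h3.symm

lemma detA_geom {A : Type*} [CommRing A] (B : ℕ) (q z : A) (n : ℕ) :
    detA B n (fun a => z * q ^ (n - 1 - (a : ℕ))) = geomProd B q n z := by
  induction n with
  | zero => simp [detA, geomProd]
  | succ n ih =>
    have : (fun i : Fin n => z * q ^ (n + 1 - 1 - ((i.succ : Fin (n + 1)) : ℕ))) =
        fun a : Fin n => z * q ^ (n - 1 - (a : ℕ)) := by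
      funext i
      congr 2
      simp only [Fin.val_succ]
      omega
    rw [detA, this, ih, geomProd, geomProd, Finset.prod_range_succ, mul_comm]
    simp

/-- The determinant `det (1 - excMat 0)` at the principal specialization `x_a = z q ^ (n - a)` of
`n + 1` letters, by induction on `n`. -/
lemma detG_geom {A : Type*} [CommRing A] {B : ℕ} (q t z : A) (hz : z ^ B = 0) (n : ℕ) :
    (1 - t * q) * (detA B (n + 1) (fun a => z * q ^ (n + 1 - 1 - (a : ℕ))) -
      detG B t (n + 1) (fun a => z * q ^ (n + 1 - 1 - (a : ℕ)))) =
    geomProd B q n (t * q * z) - t * q * geomProd B q n z := by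
  have htail : ∀ n : ℕ, (fun i : Fin n => z * q ^ (n + 1 - 1 - ((i.succ : Fin (n + 1)) : ℕ))) =
        fun a : Fin n => z * q ^ (n - 1 - (a : ℕ)) := by
    intro n
    funext i
    congr 2
    simp only [Fin.val_succ]
    omega
  have hstep : ∀ n, detG B t (n + 1) (fun a => z * q ^ (n + 1 - 1 - (a : ℕ))) =
      geomProd B q n z * (z * q ^ n * qint (z * q ^ n) B) +
      detG B t n (fun a => z * q ^ (n - 1 - (a : ℕ))) * qint (t * (z * q ^ n)) B := by
    intro n
    rw [detG, htail, detA_geom]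
    simp
  have hc : ∀ s k, qint (s * (z * q ^ k)) B * (1 - s * (z * q ^ k)) = 1 := fun s k =>
    qint_inv (by rw [mul_pow, mul_pow, hz, zero_mul, mul_zero])
  rw [detA_geom]
  induction n with
  | zero =>
    have h := hc 1 0
    simp only [pow_zero, mul_one, one_mul] at h
    simp [geomProd, detG, detA]
    linear_combination (1 - t * q) * h
  | succ n ih =>
    rw [hstep (n + 1)]
    set G := detG B t (n + 1) (fun a => z * q ^ (n + 1 - 1 - (a : ℕ)))
    have e1 : ∀ m, geomProd B q (m + 1) z = geomProd B q m z * qint (z * q ^ m) B := fun m => by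
      rw [geomProd, Finset.prod_range_succ, geomProd]
    have e2 : geomProd B q (n + 1) (t * q * z) =
        geomProd B q n (t * q * z) * qint (t * (z * q ^ (n + 1))) B := by
      rw [geomProd, Finset.prod_range_succ, geomProd]
      congr 2
      ring
    have h1 := hc 1 n
    have h2 := hc 1 (n + 1)
    have h3 := hc t (n + 1)
    rw [one_mul] at h1 h2
    rw [e1 (n + 1), e2]
    rw [e1 n] at ih ⊢
    set c1 := qint (z * q ^ n) B
    set c2 := qint (z * q ^ (n + 1)) B
    set c' := qint (t * (z * q ^ (n + 1))) B
    set e := geomProd B q n z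
    have key : c1 * (1 - t * q) * (1 - c') + t * q * c1 = t * q * c' := by
      have h4 : t * (z * q ^ (n + 1)) = t * q * (z * q ^ n) := by ring
      rw [h4] at h3
      linear_combination t * q * c' * h1 - c1 * h3
    linear_combination c' * ih + e * key + (1 - t * q) * e * c1 * h2

/-! ### Word sums -/

/-- The sum over words of length `n`, the letter `a` having weight `q ^ (N - 1 - a)`. -/
def wordSum {A : Type*} [CommRing A] (q t r : A) (N n : ℕ) : A :=
  ∑ w : Fin n → Fin N, (∏ j, q ^ (N - 1 - (w j : ℕ))) * wordWt t r w

lemma sum_letterCount_eq {n N : ℕ} (w : Fin n → Fin N) : ∑ b, letterCount w b = n := by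
  simp only [letterCount]
  rw [Finset.sum_comm]
  simp

lemma letterCount_le {n N : ℕ} (w : Fin n → Fin N) (b : Fin N) : letterCount w b ≤ n := by
  conv_rhs => rw [← sum_letterCount_eq w]
  exact Finset.single_le_sum (fun _ _ => Nat.zero_le _) (Finset.mem_univ b)

lemma contentSum_of_sum_eq {A : Type*} [CommRing A] (t r : A) {N n : ℕ} (β : Fin N → ℕ)
    (h : ∑ a, β a = n) :
    contentSum t r β = ∑ w : Fin n → Fin N, if letterCount w = β then wordWt t r w else 0 := by
  subst h
  rfl

/-- Grouping words of length `n < B` by content. -/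
lemma sum_contentSum {A : Type*} [CommRing A] {B : ℕ} (q t r z : A) (hz : z ^ B = 0) (N : ℕ) :
    ∑ β : Fin N → Fin B, (∏ a : Fin N, (z * q ^ (N - 1 - (a : ℕ))) ^ (β a : ℕ)) *
      contentSum t r (fun a => (β a : ℕ)) = ∑ n ∈ Finset.range B, z ^ n * wordSum q t r N n := by
  have h1 : ∀ β : Fin N → Fin B, (∏ a : Fin N, (z * q ^ (N - 1 - (a : ℕ))) ^ (β a : ℕ)) *
      contentSum t r (fun a => (β a : ℕ)) = ∑ n ∈ Finset.range B, z ^ n * ∑ w : Fin n → Fin N,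
        if letterCount w = (fun a => (β a : ℕ)) then
          (∏ j, q ^ (N - 1 - (w j : ℕ))) * wordWt t r w else 0 := by
    intro β
    have h2 : ∏ a : Fin N, (z * q ^ (N - 1 - (a : ℕ))) ^ (β a : ℕ) =
        z ^ (∑ a, (β a : ℕ)) * ∏ a : Fin N, (q ^ (N - 1 - (a : ℕ))) ^ (β a : ℕ) := by
      rw [← Finset.prod_pow_eq_pow_sum, ← Finset.prod_mul_distrib]
      simp only [mul_pow]
    rw [h2]
    by_cases h : ∑ a, (β a : ℕ) < B
    · rw [Finset.sum_eq_single (∑ a, (β a : ℕ)), mul_assoc,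
        contentSum_of_sum_eq t r (fun a => (β a : ℕ)) rfl, Finset.mul_sum]
      · congr 1
        refine Finset.sum_congr rfl fun w _ => ?_
        split_ifs with h3
        · rw [prod_letters w (fun b => q ^ (N - 1 - (b : ℕ)))]
          simp only [h3]
        · simp
      · intro n _ hn
        rw [Finset.sum_eq_zero, mul_zero]
        intro w _
        rw [if_neg]
        intro h3
        apply hn
        rw [← sum_letterCount_eq w, h3]
      · intro h3
        exact absurd (Finset.mem_range.2 h) h3
    · have h3 : z ^ (∑ a, (β a : ℕ)) = 0 := pow_eq_zero_of_le (not_lt.1 h) hz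
      rw [h3, zero_mul, zero_mul, eq_comm]
      refine Finset.sum_eq_zero fun n hn => ?_
      rw [Finset.sum_eq_zero, mul_zero]
      intro w _
      rw [if_neg]
      intro h4
      apply h
      have := sum_letterCount_eq w
      rw [h4] at this
      rw [this]
      exact Finset.mem_range.1 hn
  rw [Finset.sum_congr rfl fun β _ => h1 β, Finset.sum_comm]
  refine Finset.sum_congr rfl fun n hn => ?_
  rw [← Finset.mul_sum, Finset.sum_comm, wordSum]
  congr 1
  refine Finset.sum_congr rfl fun w _ => ?_
  rw [Finset.sum_eq_single
    (fun a => ⟨letterCount w a, (letterCount_le w a).trans_lt (Finset.mem_range.1 hn)⟩)]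
  · simp
  · intro β _ hβ
    rw [if_neg]
    intro h
    apply hβ
    funext a
    ext
    exact (congrFun h a).symm
  · simp

/-- The generating function of the word sums, a truncated form of
`∑ z^n A_n / (q; q)_n = (1 - t q) e_q(r z) / (e_q(t q z) - t q e_q(z))` with
`e_q(z) = ∑ z^k / (q; q)_k`. -/
lemma wordSum_gf {A : Type*} [CommRing A] {B M : ℕ} (hB : B ≠ 0) (q t r z : A) (hz : z ^ B = 0)
    (hq : q ^ M = 0) :
    (∑ n ∈ Finset.range B, z ^ n * wordSum q t r (M + 1) n) *
      ∑ k ∈ Finset.range B, qpochInv q M k * ((t * q) ^ k - t * q) * z ^ k =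
    (1 - t * q) * ∑ k ∈ Finset.range B, qpochInv q M k * r ^ k * z ^ k := by
  have hI : Ideal.span {z} ^ B = ⊥ := by
    rw [Ideal.span_singleton_pow, hz, Ideal.span_singleton_eq_bot]
  have hx : ∀ a : Fin (M + 1), z * q ^ (M + 1 - 1 - (a : ℕ)) ∈ Ideal.span {z} := fun a =>
    Ideal.mul_mem_right _ _ (Ideal.mem_span_singleton_self z)
  have h1 := words_gf hI t r _ hx
  have h2 := masterSum_excMat hI t (M + 1) _ hx 0 (Ideal.zero_mem _)
  rw [add_zero, one_mul] at h2
  rw [sum_contentSum q t r z hz] at h1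
  have h3 := detG_geom q t z hz M
  rw [geomProd_eq hq hB z hz, geomProd_eq hq hB (t * q * z) (by rw [mul_pow, hz, mul_zero])] at h3
  have h4 : ∏ a : Fin (M + 1), qint (r * (z * q ^ (M + 1 - 1 - (a : ℕ)))) B =
      ∑ k ∈ Finset.range B, qpochInv q M k * r ^ k * z ^ k := by
    have h5 := geomProd_eq (M := M) hq hB (r * z) (by rw [mul_pow, hz, mul_zero])
    -- the factor of index `M` equals `1` since `q ^ M = 0`
    have h6 : geomProd B q (M + 1) (r * z) = geomProd B q M (r * z) := by
      rw [geomProd, Finset.prod_range_succ, hq, geomProd, mul_zero]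
      obtain ⟨B, rfl⟩ := Nat.exists_eq_succ_of_ne_zero hB
      simp [qint, Finset.sum_range_succ']
    rw [← h6, geomProd, ← Finset.prod_range_reflect, Finset.prod_range] at h5
    simp only [mul_pow, ← mul_assoc] at h5 ⊢
    exact h5
  rw [h4] at h1
  have h7 : (∑ k ∈ Finset.range B, qpochInv q M k * ((t * q) ^ k - t * q) * z ^ k) =
      (∑ k ∈ Finset.range B, qpochInv q M k * (t * q * z) ^ k) -
        t * q * ∑ k ∈ Finset.range B, qpochInv q M k * z ^ k := by
    rw [Finset.mul_sum, ← Finset.sum_sub_distrib]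
    exact Finset.sum_congr rfl fun k _ => by ring
  rw [h7, ← h3, h1]
  linear_combination ((1 - t * q) * ∑ k ∈ Finset.range B, qpochInv q M k * r ^ k * z ^ k) * h2

lemma map_wordWt {A P : Type*} [CommRing A] [CommRing P] (f : A →+* P) (t r : A) {n N : ℕ}
    (w : Fin n → Fin N) : f (wordWt t r w) = wordWt (f t) (f r) w := by
  simp only [wordWt, map_prod]
  refine Finset.prod_congr rfl fun j _ => ?_
  split_ifs <;> simp

lemma map_wordSum {A P : Type*} [CommRing A] [CommRing P] (f : A →+* P) (q t r : A) (N n : ℕ) :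
    f (wordSum q t r N n) = wordSum (f q) (f t) (f r) N n := by
  simp only [wordSum, map_sum, map_mul, map_prod, map_pow, map_wordWt]

lemma map_qpochInv {A P : Type*} [CommRing A] [CommRing P] (f : A →+* P) (q : A) (N n : ℕ) :
    f (qpochInv q N n) = qpochInv (f q) N n := by
  simp only [qpochInv, map_prod, map_qint, map_pow]

/-- Comparison of coefficients in `wordSum_gf`, with `z` the class of `X` in
`K[X] / (X ^ (n + 1))`. -/
lemma wordSum_rec {K : Type*} [CommRing K] {M : ℕ} (q t r : K) (hq : q ^ M = 0) (n : ℕ) :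
    ∑ p ∈ Finset.HasAntidiagonal.antidiagonal n, wordSum q t r (M + 1) p.1 *
      (qpochInv q M p.2 * ((t * q) ^ p.2 - t * q)) = (1 - t * q) * (qpochInv q M n * r ^ n) := by
  set J : Ideal (Polynomial K) := Ideal.span {Polynomial.X ^ (n + 1)} with hJ
  set f : K →+* (Polynomial K ⧸ J) := (Ideal.Quotient.mk J).comp Polynomial.C with hf
  have hz : (Ideal.Quotient.mk J Polynomial.X) ^ (n + 1) = 0 := by
    rw [← map_pow, Ideal.Quotient.eq_zero_iff_mem]
    exact Ideal.mem_span_singleton_self _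
  have h := wordSum_gf (Nat.succ_ne_zero n) (f q) (f t) (f r) _ hz
    (M := M) (by rw [← map_pow, hq, map_zero])
  simp only [← map_wordSum, ← map_qpochInv, ← map_mul f, ← map_pow f, ← map_sub f] at h
  rw [← map_one f, ← map_sub f] at h
  simp only [hf, RingHom.comp_apply, ← map_pow (Ideal.Quotient.mk J),
    ← map_mul (Ideal.Quotient.mk J), ← map_sum (Ideal.Quotient.mk J)] at h
  rw [Ideal.Quotient.eq, hJ, Ideal.mem_span_singleton, Polynomial.X_pow_dvd_iff] at h
  have h1 := h n (Nat.lt_succ_self n)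
  rw [Polynomial.coeff_sub, sub_eq_zero, Polynomial.coeff_mul, Polynomial.coeff_C_mul] at h1
  have e : ∀ (g : ℕ → K) (m : ℕ), m ≤ n → (∑ k ∈ Finset.range (n + 1),
      Polynomial.C (g k) * Polynomial.X ^ k).coeff m = g m := by
    intro g m hm
    simp only [Polynomial.finsetSum_coeff, Polynomial.coeff_C_mul_X_pow]
    simp [Nat.lt_succ_of_le hm]
  rw [e _ n le_rfl] at h1
  rw [← h1]
  refine Finset.sum_congr rfl fun p hp => ?_
  have hp' := Finset.HasAntidiagonal.mem_antidiagonal.1 hp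
  rw [e _ p.2 (by omega)]
  simp only [mul_comm (Polynomial.X ^ _)]
  rw [e _ p.1 (by omega)]

/-! ### Sorting permutations and the major index -/

lemma sort_eq_iff_strictMono {n N : ℕ} (w : Fin n → Fin N) (σ : Equiv.Perm (Fin n)) :
    σ = Tuple.sort w ↔ StrictMono (fun i => toLex (w (σ i), σ i)) :=
  Tuple.eq_sort_iff'

lemma wordRank_eq {n N : ℕ} (w : Fin n → Fin N) (σ : Equiv.Perm (Fin n)) (h : Tuple.sort w = σ)
    (i : Fin n) : wordRank w (σ i) = i := by
  have hs := (sort_eq_iff_strictMono w σ).1 h.symm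
  rw [wordRank, ← Finset.sum_add_distrib, ← Equiv.sum_comp σ]
  have h1 : ∀ i', ((if w (σ i') < w (σ i) then 1 else 0) +
      if σ i' < σ i ∧ w (σ i') = w (σ i) then 1 else 0) = if i' < i then 1 else 0 := by
    intro i'
    have h2 := hs.lt_iff_lt (a := i') (b := i)
    rw [Prod.Lex.toLex_lt_toLex] at h2
    simp only at h2
    simp only [← h2]
    by_cases h3 : w (σ i') < w (σ i)
    · simp [h3, h3.ne]
    · by_cases h4 : w (σ i') = w (σ i) <;> simp [h3, h4]
  simp only [h1]
  rw [← Finset.card_filter, Finset.filter_gt_eq_Iio, Fin.card_Iio]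

lemma exc_eq {n : ℕ} (σ : Equiv.Perm (Fin n)) :
    exc n σ = ∑ i, if i < σ i then 1 else 0 := by
  rw [exc, ← Finset.card_filter]
  symm
  refine Finset.card_bij (fun (i : Fin n) _ => (i : ℕ)) ?_ ?_ ?_
  · intro i hi
    exact Finset.mem_filter.2 ⟨Finset.mem_range.2 i.2, i.2, (Finset.mem_filter.1 hi).2⟩
  · intro i _ j _ h
    exact Fin.ext h
  · intro i hi
    obtain ⟨h1, h2, h3⟩ := Finset.mem_filter.1 hi
    exact ⟨⟨i, h2⟩, Finset.mem_filter.2 ⟨Finset.mem_univ _, h3⟩, rfl⟩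

/-- The ranks of the letters of a word determine the excedances and the fixed points of the
permutation sorting it. -/
lemma wordWt_eq {A : Type*} [CommRing A] (t r : A) {n N : ℕ} (w : Fin n → Fin N)
    (σ : Equiv.Perm (Fin n)) (h : Tuple.sort w = σ) :
    wordWt t r w = t ^ exc n σ * r ^ fixpts n σ := by
  rw [exc_eq, fixpts, Finset.card_filter, ← Finset.prod_pow_eq_pow_sum,
    ← Finset.prod_pow_eq_pow_sum, ← Finset.prod_mul_distrib, wordWt, ← Equiv.prod_comp σ]
  refine Finset.prod_congr rfl fun i _ => ?_
  rw [wordRank_eq w σ h]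
  rcases lt_trichotomy i (σ i) with h | h | h
  · have h' : (i : ℕ) < σ i := h
    simp [h, h.ne', h']
  · simp [← h]
  · have h' : (σ i : ℕ) < i := h
    simp [h.not_gt, h.ne, h'.not_gt, h'.ne']

/-- The sequence `c` decreases, by at least `δ i` from `i` to `i + 1`, and is bounded below
by `m`. -/
def ChainCond {N : ℕ} (δ : ℕ → ℕ) {n : ℕ} (c : Fin n → Fin N) (m : ℕ) : Prop :=
  (∀ (i : ℕ) (h : i + 1 < n), (c ⟨i + 1, h⟩ : ℕ) + δ i ≤ c ⟨i, by omega⟩) ∧ ∀ i, m ≤ (c i : ℕ)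

lemma chainCond_snoc {N : ℕ} (δ : ℕ → ℕ) {n : ℕ} (c : Fin n → Fin N) (d : Fin N) (m : ℕ) :
    ChainCond δ (Fin.snoc c d : Fin (n + 1) → Fin N) m ↔
      m ≤ d ∧ ChainCond δ c (d + δ (n - 1)) := by
  have e1 : ∀ (i : ℕ) (h : i < n), (Fin.snoc c d : Fin (n + 1) → Fin N) ⟨i, by omega⟩ =
      c ⟨i, h⟩ := fun i h => Fin.snoc_castSucc (α := fun _ => Fin N) d c ⟨i, h⟩
  have e2 : (Fin.snoc c d : Fin (n + 1) → Fin N) ⟨n, by omega⟩ = d :=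
    Fin.snoc_last (α := fun _ => Fin N) d c
  constructor
  · rintro ⟨h1, h2⟩
    refine ⟨?_, ⟨fun i h => ?_, ?_⟩⟩
    · have := h2 ⟨n, by omega⟩
      rwa [e2] at this
    · have := h1 i (by omega)
      rwa [e1 _ h, e1 _ (by omega)] at this
    · -- the last entry of `c` is the least one
      have h3 : ∀ (k i : ℕ) (h : i + k + 1 = n), (d : ℕ) + δ (n - 1) ≤ c ⟨i, by omega⟩ := by
        intro k
        induction k with
        | zero =>
          rintro i rfl
          have := h1 i (by omega)
          rw [e1 i (by omega)] at this
          simp only [add_zero, Nat.add_sub_cancel]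
          refine le_trans (le_of_eq ?_) this
          congr 2
          exact e2.symm
        | succ k ih =>
          intro i h
          have h4 := ih (i + 1) (by omega)
          have h5 := h1 i (by omega)
          rw [e1 i (by omega), e1 (i + 1) (by omega)] at h5
          omega
      intro i
      exact h3 (n - 1 - i) i (by have := i.2; omega)
  · rintro ⟨h1, h2, h3⟩
    refine ⟨fun i h => ?_, fun i => ?_⟩
    · rcases Nat.lt_or_ge (i + 1) n with h4 | h4
      · rw [e1 _ h4, e1 _ (by omega)]
        exact h2 i h4
      · have h5 : n = i + 1 := by omega
        subst h5
        rw [e2, e1 i (by omega)]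
        have := h3 ⟨i, by omega⟩
        simpa using this
    · rcases Nat.lt_or_ge i n with h4 | h4
      · have := h3 ⟨i, h4⟩
        have h6 := e1 i h4
        simp only [Fin.eta] at h6
        rw [h6]
        omega
      · have : i = ⟨n, by omega⟩ := Fin.ext (by have := i.2; simp only; omega)
        rw [this, e2]
        exact h1

/-- The generating function of partitions with prescribed gaps. The bound `c i < N` is harmless
because `q ^ N = 0`. -/
lemma sum_chain {K : Type*} [CommRing K] {N : ℕ} {q : K} (hq : q ^ N = 0) (δ : ℕ → ℕ) (n m : ℕ) :
    qpoch q n * (∑ c : Fin n → Fin N, if ChainCond δ c m then q ^ (∑ i, (c i : ℕ)) else 0) =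
      q ^ (n * m + ∑ i ∈ Finset.range (n - 1), (i + 1) * δ i) := by
  induction n generalizing m with
  | zero =>
    have : ∀ c : Fin 0 → Fin N, ChainCond δ c m := fun c =>
      ⟨fun i h => absurd h (by omega), fun i => i.elim0⟩
    simp [qpoch, this]
  | succ n ih =>
    have h1 : (∑ c : Fin (n + 1) → Fin N,
        if ChainCond δ c m then q ^ (∑ i, (c i : ℕ)) else 0) =
        ∑ d : Fin N, if m ≤ d then q ^ (d : ℕ) * ∑ c : Fin n → Fin N,
          if ChainCond δ c (d + δ (n - 1)) then q ^ (∑ i, (c i : ℕ)) else 0 else 0 := by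
      rw [← (Fin.snocEquiv (fun _ => Fin N)).sum_comp, Fintype.sum_prod_type]
      refine Finset.sum_congr rfl fun d _ => ?_
      have hite : ∀ f : (Fin n → Fin N) → K, (if m ≤ d then ∑ c, f c else 0) =
          ∑ c, if m ≤ d then f c else 0 := by
        intro f
        split_ifs <;> simp
      rw [Finset.mul_sum, hite]
      refine Finset.sum_congr rfl fun c _ => ?_
      have : (Fin.snocEquiv fun _ => Fin N) (d, c) = (Fin.snoc c d : Fin (n + 1) → Fin N) := rfl
      rw [this, chainCond_snoc]
      by_cases h2 : m ≤ d <;> by_cases h3 : ChainCond δ c (d + δ (n - 1)) <;>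
        simp [h2, h3, Fin.sum_univ_castSucc, pow_add, mul_comm]
    have h2 : qpoch q (n + 1) = (1 - q ^ (n + 1)) * qpoch q n := by
      rw [qpoch, Finset.prod_range_succ, mul_comm, qpoch]
    have h3 : qpoch q n * (∑ d : Fin N, if m ≤ d then q ^ (d : ℕ) * ∑ c : Fin n → Fin N,
          if ChainCond δ c (d + δ (n - 1)) then q ^ (∑ i, (c i : ℕ)) else 0 else 0) =
        q ^ (∑ i ∈ Finset.range n, (i + 1) * δ i) *
          ∑ d ∈ Finset.range N, if m ≤ d then (q ^ (n + 1)) ^ d else 0 := by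
      rw [Finset.sum_range (fun d => if m ≤ d then (q ^ (n + 1)) ^ d else 0), Finset.mul_sum,
        Finset.mul_sum]
      refine Finset.sum_congr rfl fun d _ => ?_
      split_ifs with h4
      · rw [mul_left_comm, ih, ← pow_mul, ← pow_add, ← pow_add]
        congr 1
        rcases n with _ | n
        · simp
        · rw [Finset.sum_range_succ, Nat.add_sub_cancel]
          ring
      · simp
    have h4 : (1 - q ^ (n + 1)) * (∑ d ∈ Finset.range N, if m ≤ d then (q ^ (n + 1)) ^ d else 0) =
        q ^ ((n + 1) * m) := by
      rcases Nat.lt_or_ge N m with h5 | h5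
      · rw [Finset.sum_eq_zero, mul_zero, eq_comm]
        · exact pow_eq_zero_of_le (h5.le.trans (Nat.le_mul_of_pos_left m (Nat.succ_pos n))) hq
        · intro d hd
          rw [if_neg]
          have := Finset.mem_range.1 hd
          omega
      · obtain ⟨k, rfl⟩ := Nat.exists_eq_add_of_le h5
        have h6 : ∀ Q : K, (1 - Q) * (∑ d ∈ Finset.range (m + k), if m ≤ d then Q ^ d else 0) =
            Q ^ m - Q ^ (m + k) := by
          intro Q
          rw [Finset.sum_range_add, Finset.sum_eq_zero, zero_add]
          · simp only [Nat.le_add_right, if_true, pow_add, ← Finset.mul_sum]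
            rw [mul_left_comm, mul_neg_geom_sum]
            ring
          · intro d hd
            rw [if_neg]
            have := Finset.mem_range.1 hd
            omega
        rw [h6, ← pow_mul, ← pow_mul, mul_comm (n + 1) (m + k), pow_mul q (m + k), hq,
          zero_pow (Nat.succ_ne_zero n), sub_zero]
    rw [h1, h2, mul_assoc, h3, mul_left_comm, h4, ← pow_add, Nat.add_sub_cancel, add_comm]

lemma mem_DesSet {n : ℕ} (σ : Equiv.Perm (Fin n)) (i : ℕ) (h : i + 1 < n) :
    i ∈ DesSet n σ ↔ σ ⟨i + 1, h⟩ < σ ⟨i, by omega⟩ := by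
  rw [DesSet, Finset.mem_filter]
  constructor
  · rintro ⟨_, _, _, h3⟩
    exact h3
  · intro h3
    exact ⟨Finset.mem_range.2 (by omega), by omega, h, h3⟩

lemma maj_eq {n : ℕ} (σ : Equiv.Perm (Fin n)) : maj n σ =
    ∑ i ∈ Finset.range (n - 1), (i + 1) * if i ∈ DesSet n σ then 1 else 0 := by
  simp only [mul_ite, mul_one, mul_zero]
  rw [maj, ← Finset.sum_filter]
  refine Finset.sum_congr ?_ fun _ _ => rfl
  ext i
  rw [Finset.mem_filter]
  constructor
  · intro h
    refine ⟨?_, h⟩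
    rw [DesSet, Finset.mem_filter] at h
    obtain ⟨_, _, h2, _⟩ := h
    exact Finset.mem_range.2 (by omega)
  · exact fun h => h.2

/-- A word is sorted by `σ` precisely when, read along `σ` and with the alphabet reversed, it
decreases weakly everywhere and strictly at the descents of `σ`. -/
lemma sort_iff_chain {n N : ℕ} (σ : Equiv.Perm (Fin n)) (c : Fin n → Fin N) :
    Tuple.sort (fun j => (c (σ.symm j)).rev) = σ ↔
      ChainCond (fun i => if i ∈ DesSet n σ then 1 else 0) c 0 := by
  rw [eq_comm, sort_eq_iff_strictMono]
  simp only [Equiv.symm_apply_apply]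
  have h1 : ChainCond (fun i => if i ∈ DesSet n σ then 1 else 0) c 0 ↔
      ∀ (i : ℕ) (h : i + 1 < n), toLex ((c ⟨i, by omega⟩).rev, σ ⟨i, by omega⟩) <
        toLex ((c ⟨i + 1, h⟩).rev, σ ⟨i + 1, h⟩) := by
    rw [ChainCond, and_iff_left (fun _ => Nat.zero_le _)]
    refine forall_congr' fun i => forall_congr' fun h => ?_
    simp only [mem_DesSet σ i h, Prod.Lex.toLex_lt_toLex, Fin.rev_lt_rev, Fin.rev_inj]
    have h2 : σ ⟨i + 1, h⟩ ≠ σ ⟨i, by omega⟩ := by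
      intro h3
      have := congrArg Fin.val (σ.injective h3)
      simp at this
    rw [Fin.lt_def (a := c _), Fin.ext_iff (a := c _)]
    split_ifs with h3
    · have := h3.not_gt
      simp only [this, and_false, or_false]
      omega
    · have := lt_of_le_of_ne (not_lt.1 h3) h2.symm
      simp only [this, and_true]
      omega
  rw [h1]
  constructor
  · intro h i hi
    exact h (Fin.mk_lt_mk.2 (Nat.lt_succ_self i))
  · intro h
    rcases n with _ | n
    · intro i
      exact i.elim0
    · rw [Fin.strictMono_iff_lt_succ]
      intro i
      exact h i (by have := i.2; omega)

/-- Grouping words by the permutation sorting them: the words sorted by `σ` contribute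
`q ^ maj σ / (q; q)_n`. -/
lemma qpoch_mul_wordSum {K : Type*} [CommRing K] {N : ℕ} {q : K} (hq : q ^ N = 0) (t r : K)
    (n : ℕ) : qpoch q n * wordSum q t r N n =
      ∑ σ : Equiv.Perm (Fin n), q ^ maj n σ * t ^ exc n σ * r ^ fixpts n σ := by
  have h1 : wordSum q t r N n = ∑ σ : Equiv.Perm (Fin n), ∑ w : Fin n → Fin N,
      if Tuple.sort w = σ then (∏ j, q ^ (N - 1 - (w j : ℕ))) * wordWt t r w else 0 := by
    rw [Finset.sum_comm, wordSum]
    simp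
  rw [h1, Finset.mul_sum]
  refine Finset.sum_congr rfl fun σ _ => ?_
  have h2 : (∑ w : Fin n → Fin N,
      if Tuple.sort w = σ then (∏ j, q ^ (N - 1 - (w j : ℕ))) * wordWt t r w else 0) =
      (∑ c : Fin n → Fin N, if ChainCond (fun i => if i ∈ DesSet n σ then 1 else 0) c 0 then
        q ^ (∑ i, (c i : ℕ)) else 0) * (t ^ exc n σ * r ^ fixpts n σ) := by
    rw [← ((Equiv.arrowCongr σ Fin.revPerm : (Fin n → Fin N) ≃ (Fin n → Fin N))).sum_comp,
      Finset.sum_mul]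
    refine Finset.sum_congr rfl fun c _ => ?_
    have h3 : (Equiv.arrowCongr σ Fin.revPerm : (Fin n → Fin N) ≃ (Fin n → Fin N)) c =
      fun j => (c (σ.symm j)).rev := rfl
    simp only [h3, sort_iff_chain]
    split_ifs with h4
    · rw [wordWt_eq t r _ σ ((sort_iff_chain σ c).2 h4), Finset.prod_pow_eq_pow_sum,
        ← Equiv.sum_comp σ]
      congr 2
      refine Finset.sum_congr rfl fun i _ => ?_
      simp only [Equiv.symm_apply_apply, Fin.val_rev]
      have := (c i).2
      omega
    · simp
  rw [h2, ← mul_assoc, sum_chain hq, maj_eq, mul_zero, zero_add]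
  ring

/-! ### From the recurrence to the closed formula -/

lemma qbinom_zero_right {A : Type*} [CommRing A] (q : A) (n : ℕ) : qbinom q n 0 = 1 := by
  cases n <;> rfl

lemma qbinom_eq_zero {A : Type*} [CommRing A] (q : A) :
    ∀ n k : ℕ, n < k → qbinom q n k = 0
  | 0, k + 1, _ => rfl
  | n + 1, k + 1, h => by
    rw [qbinom, qbinom_eq_zero q n k (by omega), qbinom_eq_zero q n (k + 1) (by omega)]
    simp

lemma qbinom_self {A : Type*} [CommRing A] (q : A) (n : ℕ) : qbinom q n n = 1 := by
  induction n with
  | zero => rfl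
  | succ n ih => rw [qbinom, ih, qbinom_eq_zero q n (n + 1) (by omega)]; simp

lemma qpoch_succ {A : Type*} [CommRing A] (q : A) (n : ℕ) :
    qpoch q (n + 1) = qpoch q n * (1 - q ^ (n + 1)) := Finset.prod_range_succ _ _

lemma qbinom_qpoch {A : Type*} [CommRing A] (q : A) (n : ℕ) :
    ∀ a b : ℕ, a + b = n → qbinom q n a * (qpoch q a * qpoch q b) = qpoch q n := by
  induction n with
  | zero =>
    intro a b h
    obtain ⟨rfl, rfl⟩ : a = 0 ∧ b = 0 := by omega
    simp [qbinom, qpoch]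
  | succ n ih =>
    intro a b h
    rcases a with _ | a
    · obtain rfl : b = n + 1 := by omega
      simp [qbinom_zero_right, qpoch]
    rcases b with _ | b
    · obtain rfl : a = n := by omega
      rw [qbinom_self]
      simp [qpoch]
    have h1 := ih a (b + 1) (by omega)
    have h2 := ih (a + 1) b (by omega)
    obtain rfl : n = a + b + 1 := by omega
    rw [qbinom, qpoch_succ q (a + b + 1)]
    rw [qpoch_succ q b] at h1
    rw [qpoch_succ q a] at h2
    rw [qpoch_succ q a, qpoch_succ q b]
    linear_combination (1 - q ^ (a + 1)) * h1 + q ^ (a + 1) * (1 - q ^ (b + 1)) * h2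

lemma qmultinomial_qpoch {A : Type*} [CommRing A] (q : A) (m : ℕ) :
    ∀ k : Fin (m + 1) → ℕ,
      qmultinomial q m k * ∏ i, qpoch q (k i) = qpoch q (∑ i, k i) := by
  induction m with
  | zero => intro k; simp [qmultinomial, qbinom_self]
  | succ m ih =>
    intro k
    have h1 : qmultinomial q (m + 1) k =
        qbinom q (∑ i, k i) (k 0) * qmultinomial q m (fun i => k i.succ) := by
      rw [qmultinomial, Fin.prod_univ_succ, qmultinomial]
      congr 1
      · congr 1
        exact Finset.sum_congr (Finset.filter_true_of_mem fun j _ => Fin.zero_le j) fun _ _ => rfl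
      · refine Finset.prod_congr rfl fun i _ => ?_
        congr 1
        rw [Finset.sum_filter, Finset.sum_filter, Fin.sum_univ_succ]
        simp [Fin.succ_le_succ_iff]
    have h2 := ih fun i => k i.succ
    have h3 := qbinom_qpoch q (∑ i, k i) (k 0) (∑ i : Fin (m + 1), k i.succ)
      (Fin.sum_univ_succ k).symm
    rw [h1, Fin.prod_univ_succ, ← h3, ← h2]
    ring

/-- The coefficients of `R * G ^ m` as sums over compositions. -/
lemma coeff_mul_pow {F : Type*} [CommRing F] (a b : ℕ → F) (m n : ℕ) :
    PowerSeries.coeff n (PowerSeries.mk a * PowerSeries.mk b ^ m) =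
      ∑ k ∈ Finset.Nat.antidiagonalTuple (m + 1) n, a (k 0) * ∏ i : Fin m, b (k i.succ) := by
  have h1 : (PowerSeries.mk a * PowerSeries.mk b ^ m : PowerSeries F) =
      ∏ i : Fin (m + 1), PowerSeries.mk (if i = 0 then a else b) := by
    rw [Fin.prod_univ_succ]
    simp
  rw [h1, PowerSeries.coeff_prod]
  refine Finset.sum_equiv Finsupp.equivFunOnFinite (fun l => ?_) fun l _ => ?_
  · simp [Finset.Nat.mem_antidiagonalTuple]
  · rw [Fin.prod_univ_succ]
    simp

/-- Solving the recurrence `A = R + A * G` for exponential-type q-generating functions: the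
Neumann series `R * ∑ G ^ m` stops at `m = n / 2` in degree `n`, because `g 0 = g 1 = 0`. -/
lemma solve_rec {F : Type*} [Field F] (q r : F) (hq : ∀ n, qpoch q n ≠ 0) (A g : ℕ → F)
    (g0 : g 0 = 0) (g1 : g 1 = 0)
    (hA : ∀ n, A n = r ^ n + ∑ p ∈ Finset.HasAntidiagonal.antidiagonal n,
      qbinom q n p.1 * A p.1 * g p.2) (n : ℕ) :
    A n = ∑ m ∈ Finset.range (n / 2 + 1), ∑ k ∈ Finset.Nat.antidiagonalTuple (m + 1) n,
      qmultinomial q m k * r ^ k 0 * ∏ i : Fin m, g (k i.succ) := by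
  set R : PowerSeries F := PowerSeries.mk fun k => r ^ k / qpoch q k with hR
  set G : PowerSeries F := PowerSeries.mk fun k => g k / qpoch q k with hG
  set S : PowerSeries F := PowerSeries.mk fun k => A k / qpoch q k with hS
  have hrec : S = R + S * G := by
    ext n
    rw [map_add, PowerSeries.coeff_mul]
    simp only [hS, hR, hG, PowerSeries.coeff_mk]
    rw [hA n, add_div, Finset.sum_div]
    congr 1
    refine Finset.sum_congr rfl fun p hp => ?_
    rw [← qbinom_qpoch q n p.1 p.2 (Finset.HasAntidiagonal.mem_antidiagonal.1 hp)]
    have hn := hq n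
    rw [← qbinom_qpoch q n p.1 p.2 (Finset.HasAntidiagonal.mem_antidiagonal.1 hp)] at hn
    have h1 := hq p.1
    have h2 := hq p.2
    have h3 : qbinom q n p.1 ≠ 0 := left_ne_zero_of_mul hn
    field_simp
  have hit : ∀ m, S = R * ∑ i ∈ Finset.range m, G ^ i + S * G ^ m := by
    intro m
    induction m with
    | zero => simp
    | succ m ih =>
      rw [Finset.sum_range_succ, pow_succ]
      linear_combination ih + G ^ m * hrec
  have hX : (PowerSeries.X : PowerSeries F) ^ 2 ∣ G := by
    rw [PowerSeries.X_pow_dvd_iff]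
    intro k hk
    interval_cases k <;> simp [hG, g0, g1]
  have hrem : PowerSeries.coeff n (S * G ^ (n / 2 + 1)) = 0 := by
    have h : (PowerSeries.X : PowerSeries F) ^ (2 * (n / 2 + 1)) ∣ S * G ^ (n / 2 + 1) := by
      rw [pow_mul]
      exact (pow_dvd_pow_of_dvd hX _).mul_left _
    exact PowerSeries.X_pow_dvd_iff.1 h n (by omega)
  have h1 := congrArg (PowerSeries.coeff n) (hit (n / 2 + 1))
  rw [map_add, hrem, add_zero, Finset.mul_sum, map_sum] at h1
  simp only [hS, PowerSeries.coeff_mk] at h1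
  rw [div_eq_iff (hq n), Finset.sum_mul] at h1
  rw [h1]
  refine Finset.sum_congr rfl fun m _ => ?_
  rw [hR, hG, coeff_mul_pow, Finset.sum_mul]
  refine Finset.sum_congr rfl fun k hk => ?_
  have h2 := qmultinomial_qpoch q m k
  rw [Finset.Nat.mem_antidiagonalTuple.1 hk, Fin.prod_univ_succ] at h2
  rw [← h2, Finset.prod_div_distrib]
  have h3 := hq (k 0)
  have h4 : ∏ i : Fin m, qpoch q (k i.succ) ≠ 0 := Finset.prod_ne_zero_iff.2 fun i _ => hq _
  field_simp

lemma map_qbinom {A B : Type*} [CommRing A] [CommRing B] (f : A →+* B) (q : A) :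
    ∀ n k : ℕ, f (qbinom q n k) = qbinom (f q) n k
  | n, 0 => by rw [qbinom_zero_right, qbinom_zero_right, map_one]
  | 0, k + 1 => map_zero f
  | n + 1, k + 1 => by
    rw [qbinom, qbinom, map_add, map_mul, map_pow, map_qbinom f q n k, map_qbinom f q n (k + 1)]

/-- The recurrence for the polynomials `A_n` in a ring in which `q` is nilpotent. -/
lemma rec_nilpotent {K : Type*} [CommRing K] {M : ℕ} (q t r : K) (hq : q ^ M = 0) (n : ℕ) :
    ∑ p ∈ Finset.HasAntidiagonal.antidiagonal n, qbinom q n p.1 *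
      (∑ σ : Equiv.Perm (Fin p.1), q ^ maj p.1 σ * t ^ exc p.1 σ * r ^ fixpts p.1 σ) *
        ((t * q) ^ p.2 - t * q) = (1 - t * q) * r ^ n := by
  have h := congrArg (qpoch q n * ·) (wordSum_rec q t r hq n)
  have hq' : q ^ (M + 1) = 0 := by rw [pow_succ, hq, zero_mul]
  simp only [Finset.mul_sum] at h
  have hn := qpochInv_mul hq n
  have e : qpoch q n * ((1 - t * q) * (qpochInv q M n * r ^ n)) = (1 - t * q) * r ^ n := by
    linear_combination (1 - t * q) * r ^ n * hn
  rw [e] at h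
  rw [← h]
  refine Finset.sum_congr rfl fun p hp => ?_
  rw [← qpoch_mul_wordSum hq' t r p.1,
    ← qbinom_qpoch q n p.1 p.2 (Finset.HasAntidiagonal.mem_antidiagonal.1 hp)]
  have hp2 := qpochInv_mul hq p.2
  linear_combination (-(qbinom q n p.1 * (qpoch q p.1 * wordSum q t r (M + 1) p.1) *
        ((t * q) ^ p.2 - t * q))) * hp2

/-- A polynomial divisible by every power of `q` vanishes. -/
lemma eq_zero_of_forall_dvd (P : Rqtr) (h : ∀ M : ℕ, qv ^ M ∣ P) : P = 0 := by
  by_contra hP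
  obtain ⟨Q, hQ⟩ := h (P.totalDegree + 1)
  have hQ0 : Q ≠ 0 := by rintro rfl; exact hP (by rw [hQ, mul_zero])
  have hd := congrArg MvPolynomial.totalDegree hQ
  rw [qv, MvPolynomial.totalDegree_mul_of_isDomain (pow_ne_zero _ (MvPolynomial.X_ne_zero 0)) hQ0,
    MvPolynomial.totalDegree_X_pow] at hd
  omega

/-- The recurrence holds modulo every power of `q`, hence in `ℤ[q, t, r]`. -/
lemma rec_poly (n : ℕ) :
    ∑ p ∈ Finset.HasAntidiagonal.antidiagonal n,
      qbinom qv n p.1 * qEulerPolyFix p.1 * ((tv * qv) ^ p.2 - tv * qv) =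
        (1 - tv * qv) * rv ^ n := by
  rw [← sub_eq_zero]
  refine eq_zero_of_forall_dvd _ fun M => ?_
  rw [← Ideal.mem_span_singleton, ← Ideal.Quotient.eq]
  set f := Ideal.Quotient.mk (Ideal.span {qv ^ M}) with hf
  have hq : f qv ^ M = 0 := by
    rw [← map_pow, hf, Ideal.Quotient.eq_zero_iff_mem]
    exact Ideal.mem_span_singleton_self _
  have h := rec_nilpotent (f qv) (f tv) (f rv) hq n
  simp only [map_sum, map_mul, map_sub, map_pow, map_one, map_qbinom, qEulerPolyFix]
  exact h

/-- The weight `tq [k - 1]_{tq}` of a block of size `k`. -/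
noncomputable def blockWeight (k : ℕ) : Rqtr := tv * qv * qint (tv * qv) (k - 1)

lemma blockWeight_eq (k : ℕ) :
    (tv * qv) ^ (k + 1) - tv * qv = -(1 - tv * qv) * blockWeight (k + 1) := by
  have h := geom_sum_mul (tv * qv) k
  rw [blockWeight, Nat.add_sub_cancel, qint]
  linear_combination (-(tv * qv)) * h

/-- The recurrence for `A_n`, obtained from `rec_poly` by cancelling `1 - t q`. The term with
`p = (n, 0)` of `rec_poly` is `(1 - t q) A_n`. -/
lemma qEulerPolyFix_rec (n : ℕ) :
    qEulerPolyFix n = rv ^ n + ∑ p ∈ Finset.HasAntidiagonal.antidiagonal n,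
      qbinom qv n p.1 * qEulerPolyFix p.1 * blockWeight p.2 := by
  have h0 : (1 - tv * qv : Rqtr) ≠ 0 := by
    intro h
    have := congrArg MvPolynomial.constantCoeff h
    simp [tv, qv] at this
  refine mul_left_cancel₀ h0 ?_
  rw [mul_add, ← rec_poly n, Finset.mul_sum, ← Finset.sum_add_distrib]
  rw [Finset.sum_eq_single (n, 0)]
  · simp [qbinom_self, blockWeight, qint]
    ring
  · rintro ⟨a, b⟩ hp hne
    have := Finset.HasAntidiagonal.mem_antidiagonal.1 hp
    rcases b with _ | b
    · exact absurd (by simpa using this) fun h : a = n => hne (by rw [h])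
    · rw [blockWeight_eq]
      ring
  · intro h
    exact absurd (Finset.HasAntidiagonal.mem_antidiagonal.2 (by simp)) h

lemma qpoch_qv_ne_zero (n : ℕ) : qpoch qv n ≠ 0 := by
  intro h
  have := congrArg MvPolynomial.constantCoeff h
  simp [qpoch, qv] at this

lemma map_qpoch {A B : Type*} [CommRing A] [CommRing B] (f : A →+* B) (q : A) (n : ℕ) :
    f (qpoch q n) = qpoch (f q) n := by
  simp [qpoch]

/-- Closed formula for `A_n^{maj,exc,fix}(q,t,r)` as a sum over
`m ≤ ⌊n/2⌋` and compositions `(k_0,k_1,…,k_m)` of `n` with `k_i ≥ 2` for `i ≥ 1`. -/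
theorem qEulerian_formula (n : ℕ) :
    qEulerPolyFix n =
      ∑ m ∈ Finset.range (n / 2 + 1),
        ∑ k ∈ (Finset.Nat.antidiagonalTuple (m + 1) n).filter
            (fun k => ∀ i : Fin (m + 1), i ≠ 0 → 2 ≤ k i),
          qmultinomial qv m k * rv ^ k 0 *
            ∏ i ∈ Finset.univ.filter (fun i : Fin (m + 1) => i ≠ 0),
              tv * qv * qint (tv * qv) (k i - 1) := by
  set f := algebraMap Rqtr (FractionRing Rqtr) with hf
  have hinj : Function.Injective f := IsFractionRing.injective _ _
  have g0 : blockWeight 0 = 0 := by simp [blockWeight, qint]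
  have g1 : blockWeight 1 = 0 := by simp [blockWeight, qint]
  have h := solve_rec (f qv) (f rv)
    (fun n => by
      rw [← map_qpoch]
      exact (map_ne_zero_iff f hinj).2 (qpoch_qv_ne_zero n))
    (fun n => f (qEulerPolyFix n)) (fun k => f (blockWeight k))
    (by simp only [g0, map_zero]) (by simp only [g1, map_zero])
    (fun n => by
      simp only [← map_qbinom, ← map_mul, ← map_pow, ← map_sum, ← map_add]
      rw [← qEulerPolyFix_rec n]) n
  have hm : ∀ (m : ℕ) (k : Fin (m + 1) → ℕ),
      qmultinomial (f qv) m k = f (qmultinomial qv m k) := fun m k => by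
    simp only [qmultinomial, map_prod, map_qbinom]
  simp only [hm, ← map_mul, ← map_pow, ← map_prod, ← map_sum] at h
  rw [hinj h]
  refine Finset.sum_congr rfl fun m _ => ?_
  have hprod : ∀ k : Fin (m + 1) → ℕ,
      ∏ i ∈ Finset.univ.filter (fun i : Fin (m + 1) => i ≠ 0),
        tv * qv * qint (tv * qv) (k i - 1) = ∏ i : Fin m, blockWeight (k i.succ) := by
    intro k
    rw [Finset.prod_filter, Fin.prod_univ_succ]
    simp [blockWeight]
  simp only [hprod]
  -- compositions with a block of size `0` or `1` contribute nothing
  refine (Finset.sum_subset (Finset.filter_subset _ _) fun k hk hk' => ?_).symm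
  rw [Finset.mem_filter, not_and] at hk'
  have := hk' hk
  push Not at this
  obtain ⟨i, hi, hi2⟩ := this
  obtain ⟨j, rfl⟩ := Fin.exists_succ_eq.2 hi
  rw [Finset.prod_eq_zero (Finset.mem_univ j), mul_zero]
  generalize k j.succ = x at hi2
  interval_cases x
  · exact g0
  · exact g1
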